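/- arXiv:2409.06810 — 6 statements merged into one kernel-verified Lean document; each statement's English description precedes it below -/
import Mathlib

section
/- (Super-homogeneous Subfamily Lemma) Let s, k ≥ 2 be integers with s ≥ 2k, and let c(k,s) = k!/(k^k·(2s(1+2^k))^{2^k}). Let F be a k-graph on [n]. Then there exists a k-partite subgraph F' ⊆ F with some k-partition (X_1,...,X_k) such that: (1) |F'| ≥ c(k,s)·|F|; (2) for every J ∈ MI(F') and every edge E ∈ F', the projection E_J is s-strong in F'; and (3) for every edge E ∈ F' and every J ∈ MI(F'), d_{F'}(E_J) ≥ max{s, |F'|/(2k·n^{|J|})}. (Such an F', with its k-partition, is called s-super-homogeneous.) -/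
open Finset Filter

attribute [local instance] Classical.propDecidable

/-- The vertex set `[n] = {1,…,n}`. -/
def vtx (n : ℕ) : Finset ℕ := Finset.Icc 1 n

/-- `F` is a `k`-graph on `[n]`: a family of `k`-element subsets of `[n]`. -/
def IsKGraphOn (k n : ℕ) (F : Finset (Finset ℕ)) : Prop :=
  ∀ E ∈ F, E ⊆ vtx n ∧ E.card = k

/-- The vertex set of a hypergraph (union of its edges). -/
def vertexSet {α : Type} [DecidableEq α] (H : Finset (Finset α)) : Finset α := H.sup id

/-- The degree of a vertex: the number of edges containing it. -/
def vdeg {α : Type} [DecidableEq α] (H : Finset (Finset α)) (v : α) : ℕ :=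
  (H.filter fun E => v ∈ E).card

/-- Hypertrees, defined recursively: a single edge is a hypertree, and a hypertree grows
by adding a new leaf edge `E` whose intersection with the current vertex set equals its
intersection with some existing (parent) edge `F`. -/
inductive IsHypertree {α : Type} [DecidableEq α] : Finset (Finset α) → Prop
  | single (E : Finset α) : IsHypertree {E}
  | grow {H : Finset (Finset α)} (E F : Finset α) (hH : IsHypertree H) (hE : E ∉ H)
      (hF : F ∈ H) (hint : E ∩ vertexSet H = E ∩ F) : IsHypertree (insert E H)

/-- A `k`-tree: a `k`-uniform hypertree. -/
def IsKTree {α : Type} [DecidableEq α] (k : ℕ) (H : Finset (Finset α)) : Prop :=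
  IsHypertree H ∧ ∀ E ∈ H, E.card = k

/-- A hypergraph is 2-contractible if every edge contains at least two vertices of degree 1. -/
def TwoContractible {α : Type} [DecidableEq α] (H : Finset (Finset α)) : Prop :=
  ∀ E ∈ H, 2 ≤ (E.filter fun v => vdeg H v = 1).card

/-- `S` is a cross-cut of `H`: every edge meets `S` in exactly one vertex. -/
def IsCrosscut {α : Type} [DecidableEq α] (H : Finset (Finset α)) (S : Finset α) : Prop :=
  ∀ E ∈ H, (E ∩ S).card = 1

/-- `σ` is the cross-cut number of `H`: the minimum size of a cross-cut. -/
def IsCrosscutNumber {α : Type} [DecidableEq α] (H : Finset (Finset α)) (σ : ℕ) : Prop :=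
  IsLeast {m | ∃ S : Finset α, IsCrosscut H S ∧ S.card = m} σ

/-- A hypergraph is `ℓ`-overlapping if any two distinct edges meet in at most `ℓ` vertices. -/
def Overlapping {α : Type} [DecidableEq α] (ℓ : ℕ) (H : Finset (Finset α)) : Prop :=
  ∀ E ∈ H, ∀ F ∈ H, E ≠ F → (E ∩ F).card ≤ ℓ

/-- `K` is (the edge set of) a copy of `H`, i.e. the image of `H` under a map that is
injective on the vertex set of `H`. -/
def IsCopyOf {α : Type} [DecidableEq α] (H : Finset (Finset α)) (K : Finset (Finset ℕ)) : Prop :=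
  ∃ φ : α → ℕ, Set.InjOn φ ↑(vertexSet H) ∧ K = H.image fun E => E.image φ

/-- `F` contains no subgraph isomorphic to `H`. -/
def HFree {α : Type} [DecidableEq α] (H : Finset (Finset α)) (F : Finset (Finset ℕ)) : Prop :=
  ∀ K ⊆ F, ¬ IsCopyOf H K

/-- The collection of copies of `H` in `F` (as distinct subgraphs of `F`). -/
noncomputable def copies {α : Type} [DecidableEq α] (H : Finset (Finset α))
    (F : Finset (Finset ℕ)) : Finset (Finset (Finset ℕ)) :=
  F.powerset.filter (IsCopyOf H)

/-- The number of `H`-free `k`-graphs on the vertex set `[n]`. -/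
noncomputable def forb {α : Type} [DecidableEq α] (n k : ℕ) (H : Finset (Finset α)) : ℕ :=
  (((vtx n).powersetCard k).powerset.filter (HFree H)).card

/-- `H` is a `k`-uniform linear cycle of length `ℓ`. -/
def IsLinearCycle {α : Type} [DecidableEq α] (k ℓ : ℕ) (H : Finset (Finset α)) : Prop :=
  ∃ E : ℕ → Finset α,
    (∀ i < ℓ, (E i).card = k) ∧
    (∀ i < ℓ, ∀ j < ℓ, i ≠ j → E i ≠ E j) ∧
    (∀ i < ℓ, (E i ∩ E ((i + 1) % ℓ)).card = 1) ∧
    (∀ i < ℓ, ∀ j < ℓ, i ≠ j → E i ∩ E ((i + 1) % ℓ) ≠ E j ∩ E ((j + 1) % ℓ)) ∧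
    (∀ i < ℓ, ∀ j < ℓ, i ≠ j → (i + 1) % ℓ ≠ j → (j + 1) % ℓ ≠ i → Disjoint (E i) (E j)) ∧
    H = (Finset.range ℓ).image E

/-- `(X 0, …, X (k-1))` is a `k`-partition of `F`. -/
def IsKPartition (k : ℕ) (F : Finset (Finset ℕ)) (X : Fin k → Finset ℕ) : Prop :=
  (∀ i j, i ≠ j → Disjoint (X i) (X j)) ∧ ∀ E ∈ F, ∀ i, (E ∩ X i).card = 1

/-- The `J`-projection of an edge. -/
def projJ {k : ℕ} (X : Fin k → Finset ℕ) (J : Finset (Fin k)) (E : Finset ℕ) : Finset ℕ :=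
  E ∩ J.sup X

/-- The pattern of a vertex set. -/
def pattern {k : ℕ} (X : Fin k → Finset ℕ) (D : Finset ℕ) : Finset (Fin k) :=
  Finset.univ.filter fun i => (D ∩ X i).Nonempty

/-- `MI(F)`: the patterns of intersections of pairs of distinct edges. -/
noncomputable def MI {k : ℕ} (F : Finset (Finset ℕ)) (X : Fin k → Finset ℕ) :
    Finset (Finset (Fin k)) :=
  ((F ×ˢ F).filter fun p => p.1 ≠ p.2).image fun p => pattern X (p.1 ∩ p.2)

/-- The link of a vertex set `D` in `F`. -/
def link {α : Type} [DecidableEq α] (F : Finset (Finset α)) (D : Finset α) :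
    Finset (Finset α) :=
  (F.filter fun E => D ⊆ E).image fun E => E \ D

/-- The degree of a vertex set `D` in `F`: the size of its link. -/
def setDeg {α : Type} [DecidableEq α] (F : Finset (Finset α)) (D : Finset α) : ℕ :=
  (link F D).card

/-- A nonempty hypergraph is `s`-diverse if every vertex has degree less than `|H|/s`. -/
def SDiverse {α : Type} [DecidableEq α] (s : ℕ) (H : Finset (Finset α)) : Prop :=
  H.Nonempty ∧ ∀ v : α, s * vdeg H v < H.card

/-- `D` is `s`-strong in `F` if its link is `s`-diverse. -/
def SStrong {α : Type} [DecidableEq α] (s : ℕ) (F : Finset (Finset α)) (D : Finset α) : Prop :=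
  SDiverse s (link F D)

/-- `F`, with `k`-partition `X`, is `s`-super-homogeneous: for every `J ∈ MI(F)` and every
edge `E ∈ F`, the projection `E_J` is `s`-strong and `d_F(E_J) ≥ max{s, |F|/(2k·n^|J|)}`. -/
def SuperHomogeneous (n k s : ℕ) (F : Finset (Finset ℕ)) (X : Fin k → Finset ℕ) : Prop :=
  ∀ J ∈ MI F X, ∀ E ∈ F,
    SStrong s F (projJ X J E) ∧
    s ≤ setDeg F (projJ X J E) ∧
    (F.card : ℝ) / (2 * k * (n : ℝ) ^ J.card) ≤ (setDeg F (projJ X J E) : ℝ)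

/-- The rank of a family of subsets of `[k]`: the minimum size of a set `D ⊆ [k]` contained
in no member of the family. -/
noncomputable def rankFam (k : ℕ) (𝒥 : Finset (Finset (Fin k))) : ℕ :=
  sInf {d | ∃ D : Finset (Fin k), D.card = d ∧ ∀ J ∈ 𝒥, ¬ D ⊆ J}

/-- A family of subsets of `[k]` is of type 1 if it contains the full power set of some
`(k-2)`-set `B`. -/
def TypeOne (k : ℕ) (𝒥 : Finset (Finset (Fin k))) : Prop :=
  ∃ B : Finset (Fin k), B.card = k - 2 ∧ ∀ S ⊆ B, S ∈ 𝒥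

/-- The constant `c(k,s) = k!/(k^k·(2s(1+2^k))^(2^k))`. -/
noncomputable def cks (k s : ℕ) : ℝ :=
  (Nat.factorial k : ℝ) / ((k : ℝ) ^ k * (2 * (s : ℝ) * (1 + 2 ^ k)) ^ (2 ^ k))

/-- Degree of a set of vertices in a (uniform) hypergraph `K`: number of edges containing it. -/
def uDeg {α : Type} [DecidableEq α] (K : Finset (Finset α)) (S : Finset α) : ℕ :=
  (K.filter fun e => S ⊆ e).card

/-- A `t`-uniform hypergraph is `d`-graded if `d_K(S) ≤ d^(t-|S|)` for all `S` with
`1 ≤ |S| ≤ t`. -/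
def Graded {α : Type} [DecidableEq α] (t : ℕ) (d : ℝ) (K : Finset (Finset α)) : Prop :=
  ∀ S : Finset α, 1 ≤ S.card → S.card ≤ t → (uDeg K S : ℝ) ≤ d ^ (t - S.card)

/-- `S` is saturated by `K`: `d_K(S) = ⌊d^(t-|S|)⌋`. -/
def Saturated {α : Type} [DecidableEq α] (t : ℕ) (d : ℝ) (K : Finset (Finset α))
    (S : Finset α) : Prop :=
  uDeg K S = ⌊d ^ (t - S.card)⌋₊

/-- `S` is admissible: no nonempty subset of `S` is saturated. -/
def Admissible {α : Type} [DecidableEq α] (t : ℕ) (d : ℝ) (K : Finset (Finset α))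
    (S : Finset α) : Prop :=
  ∀ S' ⊆ S, S'.Nonempty → ¬ Saturated t d K S'

/-- `Z_K(S)`: the vertices `v` such that `S ∪ {v}` is inadmissible and `{v}` is not
saturated. -/
noncomputable def Zset {α : Type} [DecidableEq α] (t : ℕ) (d : ℝ) (K : Finset (Finset α))
    (S : Finset α) : Finset α :=
  (vertexSet K).filter fun v => ¬ Admissible t d K (insert v S) ∧ ¬ Saturated t d K {v}

/-- `ex(G,H)`: the maximum number of edges of an `H`-free subgraph of `G`. -/
noncomputable def exIn {α : Type} [DecidableEq α] (H : Finset (Finset α))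
    (G : Finset (Finset ℕ)) : ℕ :=
  (G.powerset.filter (HFree H)).sup Finset.card

/-- The probability, in the random `k`-graph `G^(k)(n,p)` (each `k`-subset of `[n]` is an
edge independently with probability `p`), of the event `A`. -/
noncomputable def probEvent (k n : ℕ) (p : ℝ) (A : Finset (Finset ℕ) → Prop) : ℝ :=
  ∑ G ∈ ((vtx n).powersetCard k).powerset.filter A,
    p ^ G.card * (1 - p) ^ (((vtx n).powersetCard k).card - G.card)

/-- Working package: `G` is `k`-partite with parts inside `[n]` covering all edges. -/
structure GoodPart (k n : ℕ) (G : Finset (Finset ℕ)) (X : Fin k → Finset ℕ) : Prop where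
  disj : ∀ i j, i ≠ j → Disjoint (X i) (X j)
  one : ∀ E ∈ G, ∀ i, (E ∩ X i).card = 1
  cov : ∀ E ∈ G, ∀ x ∈ E, ∃ i, x ∈ X i
  sub : ∀ i, X i ⊆ vtx n

theorem GoodPart.mono {k n : ℕ} {G H : Finset (Finset ℕ)} {X : Fin k → Finset ℕ}
    (hG : GoodPart k n G X) (h : H ⊆ G) : GoodPart k n H X :=
  ⟨hG.disj, fun E hE => hG.one E (h hE), fun E hE => hG.cov E (h hE), hG.sub⟩

theorem mem_projJ {k : ℕ} {X : Fin k → Finset ℕ} {J : Finset (Fin k)} {E : Finset ℕ} {x : ℕ} :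
    x ∈ projJ X J E ↔ x ∈ E ∧ ∃ i ∈ J, x ∈ X i := by
  simp [projJ, Finset.mem_sup]

theorem proj_eq_of {k n : ℕ} {G : Finset (Finset ℕ)} {X : Fin k → Finset ℕ}
    (hG : GoodPart k n G X) {E E' : Finset ℕ} (hE : E ∈ G) (hE' : E' ∈ G) {J : Finset (Fin k)}
    (h : ∀ i ∈ J, ∃ y, y ∈ E ∧ y ∈ E' ∧ y ∈ X i) : projJ X J E = projJ X J E' := by
  ext x
  rw [mem_projJ, mem_projJ]
  have key : ∀ i ∈ J, x ∈ X i → (x ∈ E ↔ x ∈ E') := by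
    intro i hi hx
    obtain ⟨y, y1, y2, y3⟩ := h i hi
    obtain ⟨a, ha⟩ := Finset.card_eq_one.1 (hG.one E hE i)
    obtain ⟨b, hb⟩ := Finset.card_eq_one.1 (hG.one E' hE' i)
    have e1 : ∀ z, z ∈ E ∩ X i ↔ z = a := by intro z; rw [ha]; simp
    have e2 : ∀ z, z ∈ E' ∩ X i ↔ z = b := by intro z; rw [hb]; simp
    have h1 := (e1 y).1 (Finset.mem_inter.2 ⟨y1, y3⟩)
    have h2 := (e2 y).1 (Finset.mem_inter.2 ⟨y2, y3⟩)
    have h3 := e1 x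
    have h4 := e2 x
    rw [Finset.mem_inter] at h3 h4
    subst h1
    subst h2
    tauto
  constructor
  · rintro ⟨h1, i, hi, hx⟩
    exact ⟨(key i hi hx).1 h1, i, hi, hx⟩
  · rintro ⟨h1, i, hi, hx⟩
    exact ⟨(key i hi hx).2 h1, i, hi, hx⟩

theorem proj_eq_of_subset {k n : ℕ} {G : Finset (Finset ℕ)} {X : Fin k → Finset ℕ}
    (hG : GoodPart k n G X) {E E' : Finset ℕ} (hE : E ∈ G) (hE' : E' ∈ G) {J : Finset (Fin k)}
    (h : projJ X J E ⊆ E') : projJ X J E = projJ X J E' := by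
  apply proj_eq_of hG hE hE'
  intro i hi
  have h1 : (E ∩ X i).Nonempty := by
    rw [← Finset.card_pos, hG.one E hE i]; exact Nat.one_pos
  obtain ⟨y, hy⟩ := h1
  rw [Finset.mem_inter] at hy
  exact ⟨y, hy.1, h (mem_projJ.2 ⟨hy.1, i, hi, hy.2⟩), hy.2⟩

theorem mem_MI {k : ℕ} {F : Finset (Finset ℕ)} {X : Fin k → Finset ℕ} {J : Finset (Fin k)} :
    J ∈ MI F X ↔ ∃ E ∈ F, ∃ E' ∈ F, E ≠ E' ∧ ∀ i, i ∈ J ↔ ∃ y, y ∈ E ∧ y ∈ E' ∧ y ∈ X i := by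
  unfold MI pattern
  simp only [Finset.mem_image, Finset.mem_filter, Finset.mem_product, Prod.exists]
  constructor
  · rintro ⟨E, E', ⟨⟨h1, h2⟩, h3⟩, h4⟩
    refine ⟨E, h1, E', h2, h3, ?_⟩
    intro i
    rw [← h4]
    simp [Finset.Nonempty, and_assoc]
  · rintro ⟨E, h1, E', h2, h3, h4⟩
    refine ⟨E, E', ⟨⟨h1, h2⟩, h3⟩, ?_⟩
    ext i
    rw [h4]
    simp [Finset.Nonempty, and_assoc]

theorem MI_mono {k : ℕ} {F H : Finset (Finset ℕ)} {X : Fin k → Finset ℕ} (h : H ⊆ F) :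
    MI H X ⊆ MI F X := by
  intro J hJ
  rw [mem_MI] at hJ ⊢
  obtain ⟨E, h1, E', h2, h3⟩ := hJ
  exact ⟨E, h h1, E', h h2, h3⟩

theorem univ_not_mem_MI {k n : ℕ} {G : Finset (Finset ℕ)} {X : Fin k → Finset ℕ}
    (hG : GoodPart k n G X) : Finset.univ ∉ MI G X := by
  intro h
  obtain ⟨E, h1, E', h2, h3, h4⟩ := mem_MI.1 h
  have h5 := proj_eq_of hG h1 h2 (J := Finset.univ) (fun i hi => (h4 i).1 hi)
  apply h3
  have aux : ∀ A ∈ G, projJ X Finset.univ A = A := by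
    intro A hA
    ext x
    rw [mem_projJ]
    constructor
    · exact fun h => h.1
    · intro hx
      obtain ⟨i, hi⟩ := hG.cov A hA x hx
      exact ⟨hx, i, Finset.mem_univ _, hi⟩
  rw [aux E h1, aux E' h2] at h5
  exact h5

theorem link_inj (F : Finset (Finset ℕ)) (D : Finset ℕ) :
    Set.InjOn (fun E : Finset ℕ => E \ D) (F.filter fun E => D ⊆ E) := by
  intro A hA B hB h
  simp only [Finset.coe_filter, Set.mem_setOf_eq] at hA hB
  have h' : A \ D = B \ D := h
  rw [← Finset.sdiff_union_of_subset hA.2, ← Finset.sdiff_union_of_subset hB.2, h']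

theorem card_link (F : Finset (Finset ℕ)) (D : Finset ℕ) :
    (link F D).card = (F.filter fun E => D ⊆ E).card :=
  Finset.card_image_of_injOn (link_inj F D)

theorem vdeg_link_le (F : Finset (Finset ℕ)) (D : Finset ℕ) (v : ℕ) :
    vdeg (link F D) v ≤ (F.filter fun E => D ⊆ E ∧ v ∈ E ∧ v ∉ D).card := by
  unfold vdeg link
  rw [Finset.filter_image, Finset.filter_filter]
  refine Finset.card_image_le.trans (Finset.card_le_card ?_)
  intro E hE
  simp only [Finset.mem_filter, Finset.mem_sdiff] at hE ⊢
  tauto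

theorem card_proj_le {k n : ℕ} {G : Finset (Finset ℕ)} {X : Fin k → Finset ℕ}
    (hG : GoodPart k n G X) (J : Finset (Fin k)) :
    (G.image (projJ X J)).card ≤ ∏ i ∈ J, (X i).card := by
  rw [← Finset.card_pi]
  apply Finset.card_le_card_of_surjOn (fun g => J.attach.image (fun i => g i.1 i.2))
  intro D hD
  simp only [Finset.coe_image, Set.mem_image, Finset.mem_coe] at hD
  obtain ⟨E, hE, rfl⟩ := hD
  have h1 : ∀ i, ∃ a, E ∩ X i = {a} := fun i => Finset.card_eq_one.1 (hG.one E hE i)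
  choose a ha using h1
  have h2 : ∀ i z, (z ∈ E ∧ z ∈ X i) ↔ z = a i := by
    intro i z
    rw [← Finset.mem_inter, ha]; simp
  refine ⟨fun i _ => a i, ?_, ?_⟩
  · refine Finset.mem_coe.2 (Finset.mem_pi.2 ?_)
    intro i _
    exact ((h2 i (a i)).2 rfl).2
  · ext x
    simp only [Finset.mem_image, Finset.mem_attach, true_and, Subtype.exists]
    rw [mem_projJ]
    constructor
    · rintro ⟨i, hi, rfl⟩
      have := (h2 i (a i)).2 rfl
      exact ⟨this.1, i, hi, this.2⟩
    · rintro ⟨hx, i, hi, hxi⟩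
      exact ⟨i, hi, ((h2 i x).1 ⟨hx, hxi⟩).symm⟩

theorem sum_card_parts {k n : ℕ} {G : Finset (Finset ℕ)} {X : Fin k → Finset ℕ}
    (hG : GoodPart k n G X) : ∑ i, (X i).card ≤ n := by
  rw [← Finset.card_biUnion (fun i _ j _ hij => hG.disj i j hij)]
  calc _ ≤ (vtx n).card := Finset.card_le_card (Finset.biUnion_subset.2 fun i _ => hG.sub i)
    _ = n := by simp [vtx]

/-- The low-degree threshold. -/
noncomputable def theta (k n : ℕ) (g : ℕ) (J : Finset (Fin k)) : ℝ :=
  if J = ∅ then 0 else (g : ℝ) / (2 * k * (n : ℝ) ^ J.card)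

theorem theta_nonneg (k n g : ℕ) (J : Finset (Fin k)) : 0 ≤ theta k n g J := by
  unfold theta
  split_ifs
  · exact le_rfl
  · positivity

theorem sum_theta_le {k n : ℕ} (hk : 2 ≤ k) (hn : 0 < n) {G : Finset (Finset ℕ)}
    {X : Fin k → Finset ℕ}
    (hG : GoodPart k n G X) (𝒜 : Finset (Finset (Fin k))) :
    ∑ J ∈ 𝒜, theta k n G.card J * ((G.image (projJ X J)).card : ℝ) ≤ (G.card : ℝ) / 2 := by
  have hn' : (0 : ℝ) < n := by exact_mod_cast hn
  have hk' : (2 : ℝ) ≤ k := by exact_mod_cast hk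
  have hkpos : (0 : ℝ) < k := by linarith
  have h1 : ∀ J : Finset (Fin k), theta k n G.card J * ((G.image (projJ X J)).card : ℝ) ≤
      (G.card : ℝ) / (2 * k) * ((∏ i ∈ J, ((X i).card : ℝ) / n) - if J = ∅ then 1 else 0) := by
    intro J
    unfold theta
    split_ifs with hJ
    · subst hJ; simp
    · have h2 : ((G.image (projJ X J)).card : ℝ) ≤ ∏ i ∈ J, ((X i).card : ℝ) := by
        exact_mod_cast card_proj_le hG J
      rw [Finset.prod_div_distrib, Finset.prod_const, sub_zero]
      calc _ ≤ (G.card : ℝ) / (2 * k * (n : ℝ) ^ J.card) * ∏ i ∈ J, ((X i).card : ℝ) := by gcongr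
        _ = _ := by field_simp
  have h0 : ∀ J : Finset (Fin k), 0 ≤ theta k n G.card J * ((G.image (projJ X J)).card : ℝ) :=
    fun J => mul_nonneg (theta_nonneg _ _ _ _) (Nat.cast_nonneg _)
  have h3 : ∏ i : Fin k, (1 + ((X i).card : ℝ) / n) ≤ Real.exp 1 := by
    calc _ ≤ ∏ i : Fin k, Real.exp (((X i).card : ℝ) / n) := by
            apply Finset.prod_le_prod
            · intro i _; positivity
            · intro i _
              rw [add_comm]; exact Real.add_one_le_exp _
      _ = Real.exp (∑ i : Fin k, ((X i).card : ℝ) / n) := (Real.exp_sum _ _).symm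
      _ ≤ Real.exp 1 := by
            apply Real.exp_le_exp.2
            rw [← Finset.sum_div, div_le_one hn']
            exact_mod_cast sum_card_parts hG
  have h4 : Real.exp 1 < 3 := by
    have := Real.exp_one_lt_d9; linarith
  calc _ ≤ ∑ J : Finset (Fin k), theta k n G.card J * ((G.image (projJ X J)).card : ℝ) :=
        Finset.sum_le_sum_of_subset_of_nonneg (Finset.subset_univ _) (fun J _ _ => h0 J)
    _ ≤ ∑ J : Finset (Fin k), (G.card : ℝ) / (2 * k) *
        ((∏ i ∈ J, ((X i).card : ℝ) / n) - if J = ∅ then 1 else 0) :=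
        Finset.sum_le_sum fun J _ => h1 J
    _ = (G.card : ℝ) / (2 * k) * (∏ i : Fin k, (1 + ((X i).card : ℝ) / n) - 1) := by
        rw [← Finset.mul_sum, Finset.sum_sub_distrib, Finset.prod_one_add]
        simp
    _ ≤ (G.card : ℝ) / (2 * k) * k := by
        gcongr; linarith
    _ = (G.card : ℝ) / 2 := by field_simp

/-- Invariant of the cleaning process. -/
def CleanInv {k : ℕ} (s n : ℕ) (G : Finset (Finset ℕ)) (X : Fin k → Finset ℕ)
    (𝒜 : Finset (Finset (Fin k))) (H : Finset (Finset ℕ)) : Prop :=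
  ∃ T : Finset (Fin k) → Finset (Finset ℕ),
    (∀ J, T J ⊆ G) ∧ (∀ J, J ∉ MI (T J) X) ∧
    (∀ J, ∀ E ∈ T J, ∀ E' ∈ H, projJ X J E ≠ projJ X J E') ∧
    (G.card : ℝ) + ∑ J ∈ 𝒜, theta k n G.card J * ((H.image (projJ X J)).card : ℝ) ≤
      H.card + ∑ J ∈ 𝒜, (s : ℝ) * (T J).card +
        ∑ J ∈ 𝒜, theta k n G.card J * ((G.image (projJ X J)).card : ℝ)

theorem cleanInv_start {k : ℕ} (s n : ℕ) (G : Finset (Finset ℕ)) (X : Fin k → Finset ℕ)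
    (𝒜 : Finset (Finset (Fin k))) : CleanInv s n G X 𝒜 G := by
  refine ⟨fun _ => ∅, by simp, ?_, by simp, by simp⟩
  intro J h
  obtain ⟨E, h1, _⟩ := mem_MI.1 h
  simp at h1

theorem clean_step_low {k s n : ℕ} {G : Finset (Finset ℕ)} {X : Fin k → Finset ℕ}
    {𝒜 : Finset (Finset (Fin k))} {H : Finset (Finset ℕ)}
    (hI : CleanInv s n G X 𝒜 H) {J : Finset (Fin k)} (hJ : J ∈ 𝒜) {E : Finset ℕ} (hE : E ∈ H)
    (hlow : ((H.filter fun A => projJ X J E ⊆ A).card : ℝ) ≤ theta k n G.card J) :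
    CleanInv s n G X 𝒜 (H.filter fun A => ¬ projJ X J E ⊆ A) := by
  obtain ⟨T, h1, h2, h3, h4⟩ := hI
  refine ⟨T, h1, h2, fun J' A hA B hB => h3 J' A hA B (Finset.mem_filter.1 hB).1, ?_⟩
  have hc : (H.card : ℝ) = (H.filter fun A => projJ X J E ⊆ A).card +
      (H.filter fun A => ¬ projJ X J E ⊆ A).card := by
    exact_mod_cast (Finset.card_filter_add_card_filter_not (s := H) _).symm
  set H' := H.filter fun A => ¬ projJ X J E ⊆ A with hH'
  have hsub : H' ⊆ H := Finset.filter_subset _ _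
  have hkey : ∑ J' ∈ 𝒜, theta k n G.card J' * ((H'.image (projJ X J')).card : ℝ) +
      theta k n G.card J ≤
      ∑ J' ∈ 𝒜, theta k n G.card J' * ((H.image (projJ X J')).card : ℝ) := by
    rw [← Finset.add_sum_erase _ _ hJ, ← Finset.add_sum_erase 𝒜 (fun J' =>
      theta k n G.card J' * ((H.image (projJ X J')).card : ℝ)) hJ]
    have e1 : ∑ J' ∈ 𝒜.erase J, theta k n G.card J' * ((H'.image (projJ X J')).card : ℝ) ≤
        ∑ J' ∈ 𝒜.erase J, theta k n G.card J' * ((H.image (projJ X J')).card : ℝ) := by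
      apply Finset.sum_le_sum
      intro J' _
      apply mul_le_mul_of_nonneg_left _ (theta_nonneg _ _ _ _)
      exact_mod_cast Finset.card_le_card (Finset.image_subset_image hsub)
    have e2 : ((H'.image (projJ X J)).card : ℝ) + 1 ≤ (H.image (projJ X J)).card := by
      have : (H'.image (projJ X J)).card < (H.image (projJ X J)).card := by
        apply Finset.card_lt_card
        rw [Finset.ssubset_iff_of_subset (Finset.image_subset_image hsub)]
        refine ⟨projJ X J E, Finset.mem_image_of_mem _ hE, ?_⟩
        intro h
        obtain ⟨A, hA, hA'⟩ := Finset.mem_image.1 h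
        apply (Finset.mem_filter.1 hA).2
        rw [← hA']
        exact Finset.inter_subset_left
      exact_mod_cast this
    have e3 := mul_le_mul_of_nonneg_left e2 (theta_nonneg k n G.card J)
    linarith
  linarith

theorem clean_step_strong {k s n : ℕ} {G : Finset (Finset ℕ)} {X : Fin k → Finset ℕ}
    (hG : GoodPart k n G X)
    {𝒜 : Finset (Finset (Fin k))} {H : Finset (Finset ℕ)} (hHG : H ⊆ G)
    (hI : CleanInv s n G X 𝒜 H) {J : Finset (Fin k)} (hJ : J ∈ 𝒜) {E : Finset ℕ} (hE : E ∈ H)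
    (hbad : ¬ SStrong s H (projJ X J E)) :
    CleanInv s n G X 𝒜 (H.filter fun A => ¬ projJ X J E ⊆ A) := by
  obtain ⟨T, h1, h2, h3, h4⟩ := hI
  have hv : ∃ v, (link H (projJ X J E)).card ≤ s * vdeg (link H (projJ X J E)) v := by
    by_contra hcon
    push Not at hcon
    apply hbad
    refine ⟨?_, hcon⟩
    exact ⟨E \ projJ X J E, Finset.mem_image_of_mem _
      (Finset.mem_filter.2 ⟨hE, Finset.inter_subset_left⟩)⟩
  obtain ⟨v, hv⟩ := hv
  rw [card_link] at hv
  have hv2 := hv.trans (Nat.mul_le_mul_left s (vdeg_link_le H (projJ X J E) v))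
  clear hv
  set N := H.filter fun A => projJ X J E ⊆ A ∧ v ∈ A ∧ v ∉ projJ X J E with hN
  have hNH : N ⊆ H := Finset.filter_subset _ _
  have hNproj : ∀ A ∈ N, projJ X J E = projJ X J A := fun A hA =>
    proj_eq_of_subset hG (hHG hE) (hHG (hNH hA)) (Finset.mem_filter.1 hA).2.1
  have hc : (H.card : ℝ) = (H.filter fun A => projJ X J E ⊆ A).card +
      (H.filter fun A => ¬ projJ X J E ⊆ A).card := by
    exact_mod_cast (Finset.card_filter_add_card_filter_not (s := H) _).symm
  have hv3 : ((H.filter fun A => projJ X J E ⊆ A).card : ℝ) ≤ s * N.card := by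
    exact_mod_cast hv2
  have hdisj : Disjoint (T J) N := by
    rw [Finset.disjoint_left]
    intro A hA hA'
    exact h3 J A hA A (hNH hA') rfl
  have hTN : T J ∪ N ⊆ G := Finset.union_subset (h1 J) (hNH.trans hHG)
  refine ⟨Function.update T J (T J ∪ N), ?_, ?_, ?_, ?_⟩
  · intro J'
    by_cases hJ' : J' = J
    · subst hJ'; rw [Function.update_self]; exact hTN
    · rw [Function.update_of_ne hJ']; exact h1 J'
  · intro J'
    by_cases hJ' : J' = J
    · subst hJ'
      rw [Function.update_self]
      intro hmem
      obtain ⟨A, hA, B, hB, hAB, hpat⟩ := mem_MI.1 hmem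
      have hpr := proj_eq_of hG (hTN hA) (hTN hB) (J := J') (fun i hi => (hpat i).1 hi)
      rcases Finset.mem_union.1 hA with hA1 | hA1 <;> rcases Finset.mem_union.1 hB with hB1 | hB1
      · exact h2 J' (mem_MI.2 ⟨A, hA1, B, hB1, hAB, hpat⟩)
      · exact h3 J' A hA1 B (hNH hB1) hpr
      · exact h3 J' B hB1 A (hNH hA1) hpr.symm
      · have hAv := (Finset.mem_filter.1 hA1).2
        have hBv := (Finset.mem_filter.1 hB1).2
        obtain ⟨i, hi⟩ := hG.cov A (hTN hA) v hAv.2.1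
        have hiJ : i ∈ J' := (hpat i).2 ⟨v, hAv.2.1, hBv.2.1, hi⟩
        apply hAv.2.2
        rw [hNproj A hA1]
        exact mem_projJ.2 ⟨hAv.2.1, i, hiJ, hi⟩
    · rw [Function.update_of_ne hJ']; exact h2 J'
  · intro J' A hA B hB
    by_cases hJ' : J' = J
    · subst hJ'
      rw [Function.update_self] at hA
      rcases Finset.mem_union.1 hA with hA1 | hA1
      · exact h3 J' A hA1 B (Finset.mem_filter.1 hB).1
      · intro hcon
        apply (Finset.mem_filter.1 hB).2
        rw [hNproj A hA1, hcon]
        exact Finset.inter_subset_left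
    · rw [Function.update_of_ne hJ'] at hA
      exact h3 J' A hA B (Finset.mem_filter.1 hB).1
  · have e1 : ∑ J' ∈ 𝒜, theta k n G.card J' *
        (((H.filter fun A => ¬ projJ X J E ⊆ A).image (projJ X J')).card : ℝ) ≤
        ∑ J' ∈ 𝒜, theta k n G.card J' * ((H.image (projJ X J')).card : ℝ) := by
      apply Finset.sum_le_sum
      intro J' _
      apply mul_le_mul_of_nonneg_left _ (theta_nonneg _ _ _ _)
      exact_mod_cast Finset.card_le_card (Finset.image_subset_image (Finset.filter_subset _ _))
    have e2 : ∑ J' ∈ 𝒜, (s : ℝ) * ((Function.update T J (T J ∪ N)) J').card =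
        ∑ J' ∈ 𝒜, (s : ℝ) * (T J').card + s * N.card := by
      rw [← Finset.add_sum_erase _ _ hJ, ← Finset.add_sum_erase 𝒜 (fun J' =>
        (s : ℝ) * ((T J').card : ℝ)) hJ, Function.update_self, Finset.card_union_of_disjoint hdisj]
      have e3 : ∑ J' ∈ 𝒜.erase J, (s : ℝ) * ((Function.update T J (T J ∪ N)) J').card =
          ∑ J' ∈ 𝒜.erase J, (s : ℝ) * (T J').card := by
        apply Finset.sum_congr rfl
        intro J' hJ'
        rw [Function.update_of_ne (Finset.ne_of_mem_erase hJ')]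
      rw [e3]
      push_cast
      ring
    rw [e2]
    linarith

/-- The loss factor of one round. -/
noncomputable def lossA (k s : ℕ) : ℝ := 1 / (2 * (s : ℝ) * (1 + 2 ^ k))

theorem one_round {k s n : ℕ} (hk : 2 ≤ k) (hs : 2 ≤ s) (hn : 0 < n)
    {G : Finset (Finset ℕ)} {X : Fin k → Finset ℕ} (hG : GoodPart k n G X)
    (𝒜 : Finset (Finset (Fin k))) :
    (∃ J ∈ 𝒜, ∃ T ⊆ G, J ∉ MI T X ∧ lossA k s * G.card ≤ T.card) ∨
    (∃ H ⊆ G, lossA k s * G.card ≤ H.card ∧ ∀ J ∈ 𝒜, ∀ E ∈ H,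
      SStrong s H (projJ X J E) ∧
      theta k n G.card J ≤ ((H.filter fun A => projJ X J E ⊆ A).card : ℝ)) := by
  obtain ⟨H, hH, hmin⟩ := Finset.exists_min_image
    (G.powerset.filter fun H => CleanInv s n G X 𝒜 H) Finset.card
    ⟨G, Finset.mem_filter.2 ⟨Finset.mem_powerset.2 subset_rfl, cleanInv_start s n G X 𝒜⟩⟩
  rw [Finset.mem_filter, Finset.mem_powerset] at hH
  obtain ⟨hHG, hI⟩ := hH
  have hno : ∀ J, ∀ E ∈ H, ¬ CleanInv s n G X 𝒜 (H.filter fun A => ¬ projJ X J E ⊆ A) := by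
    intro J E hE hcon
    have hle := hmin _ (Finset.mem_filter.2
      ⟨Finset.mem_powerset.2 ((Finset.filter_subset _ _).trans hHG), hcon⟩)
    have hlt : (H.filter fun A => ¬ projJ X J E ⊆ A).card < H.card := by
      apply Finset.card_lt_card
      rw [Finset.ssubset_iff_of_subset (Finset.filter_subset _ _)]
      refine ⟨E, hE, ?_⟩
      intro h
      exact (Finset.mem_filter.1 h).2 Finset.inter_subset_left
    omega
  by_cases hT : ∃ J ∈ 𝒜, ∃ T ⊆ G, J ∉ MI T X ∧ lossA k s * G.card ≤ T.card
  · exact Or.inl hT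
  right
  push Not at hT
  refine ⟨H, hHG, ?_, ?_⟩
  · obtain ⟨T, h1, h2, h3, h4⟩ := hI
    have hs' : (2 : ℝ) ≤ s := by exact_mod_cast hs
    have g0 : (0 : ℝ) ≤ G.card := Nat.cast_nonneg _
    have a0 : 0 ≤ lossA k s := by unfold lossA; positivity
    have e1 := sum_theta_le hk hn hG 𝒜
    have e2 : ∑ J ∈ 𝒜, (s : ℝ) * (T J).card ≤ 2 ^ k * (s * (lossA k s * G.card)) := by
      calc _ ≤ ∑ J ∈ 𝒜, (s : ℝ) * (lossA k s * G.card) := by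
            apply Finset.sum_le_sum
            intro J hJ
            apply mul_le_mul_of_nonneg_left _ (by linarith)
            exact (hT J hJ (T J) (h1 J) (h2 J)).le
        _ = 𝒜.card * (s * (lossA k s * G.card)) := by rw [Finset.sum_const, nsmul_eq_mul]
        _ ≤ _ := by
            apply mul_le_mul_of_nonneg_right _ (by positivity)
            have : 𝒜.card ≤ 2 ^ k := by
              simpa using Finset.card_le_univ 𝒜
            exact_mod_cast this
    have e3 : 0 ≤ ∑ J ∈ 𝒜, theta k n G.card J * ((H.image (projJ X J)).card : ℝ) :=
      Finset.sum_nonneg fun J _ => mul_nonneg (theta_nonneg _ _ _ _) (Nat.cast_nonneg _)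
    have e4 : (1 + 2 ^ k) * (s * (lossA k s * G.card)) = (G.card : ℝ) / 2 := by
      unfold lossA
      have : (0 : ℝ) < 1 + 2 ^ k := by positivity
      have : (0 : ℝ) < s := by linarith
      field_simp
    have e5 : lossA k s * G.card ≤ s * (lossA k s * G.card) := by
      have : 0 ≤ lossA k s * G.card := mul_nonneg a0 g0
      nlinarith
    linarith
  · intro J hJ E hE
    constructor
    · by_contra hcon
      exact hno J E hE (clean_step_strong hG hHG hI hJ hE hcon)
    · by_contra hcon
      exact hno J E hE (clean_step_low hI hJ hE (not_le.1 hcon).le)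

theorem superHom_of {k s n : ℕ} (hk : 2 ≤ k) {G H : Finset (Finset ℕ)}
    {X : Fin k → Finset ℕ} (hG : GoodPart k n G X) (hHG : H ⊆ G)
    (h : ∀ J ∈ MI H X, ∀ E ∈ H,
      SStrong s H (projJ X J E) ∧
      theta k n G.card J ≤ ((H.filter fun A => projJ X J E ⊆ A).card : ℝ)) :
    SuperHomogeneous n k s H X := by
  intro J hJ E hE
  obtain ⟨h1, h2⟩ := h J hJ E hE
  refine ⟨h1, ?_, ?_⟩
  · have hJu : J ≠ Finset.univ := fun e => univ_not_mem_MI (hG.mono hHG) (e ▸ hJ)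
    have : ∃ i, i ∉ J := by
      by_contra hcon
      push Not at hcon
      exact hJu (Finset.eq_univ_iff_forall.2 hcon)
    obtain ⟨i, hi⟩ := this
    obtain ⟨v, hv⟩ := Finset.card_eq_one.1 (hG.one E (hHG hE) i)
    have hv' : v ∈ E ∩ X i := by rw [hv]; simp
    rw [Finset.mem_inter] at hv'
    have hvD : v ∉ projJ X J E := by
      intro hc
      obtain ⟨_, j, hj, hvj⟩ := mem_projJ.1 hc
      have hij : i ≠ j := fun e => hi (e ▸ hj)
      exact Finset.disjoint_left.1 (hG.disj i j hij) hv'.2 hvj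
    have hlt := h1.2 v
    have hpos : 0 < vdeg (link H (projJ X J E)) v := by
      unfold vdeg
      rw [Finset.card_pos]
      refine ⟨E \ projJ X J E, Finset.mem_filter.2 ⟨Finset.mem_image_of_mem _
        (Finset.mem_filter.2 ⟨hE, Finset.inter_subset_left⟩),
        Finset.mem_sdiff.2 ⟨hv'.1, hvD⟩⟩⟩
    unfold setDeg
    nlinarith
  · unfold setDeg
    rw [card_link]
    have hk' : (2 : ℝ) ≤ k := by exact_mod_cast hk
    by_cases hJ0 : J = ∅
    · subst hJ0
      have : (H.filter fun A => projJ X ∅ E ⊆ A) = H := by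
        apply Finset.filter_true_of_mem
        intro A _
        simp [projJ]
      rw [this]
      simp only [Finset.card_empty, pow_zero, mul_one]
      apply div_le_self (Nat.cast_nonneg _)
      linarith
    · refine le_trans ?_ h2
      unfold theta
      rw [if_neg hJ0]
      have : (H.card : ℝ) ≤ G.card := by exact_mod_cast Finset.card_le_card hHG
      gcongr

theorem rounds {k s n : ℕ} (hk : 2 ≤ k) (hs : 2 ≤ s) (hn : 0 < n) {X : Fin k → Finset ℕ} (m : ℕ) :
    ∀ (𝒜 : Finset (Finset (Fin k))) (G : Finset (Finset ℕ)), 𝒜.card = m → GoodPart k n G X →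
      MI G X ⊆ 𝒜 →
      ∃ F' ⊆ G, lossA k s ^ (m + 1) * G.card ≤ F'.card ∧ SuperHomogeneous n k s F' X := by
  have a0 : 0 ≤ lossA k s := by unfold lossA; positivity
  have a1 : lossA k s ≤ 1 := by
    unfold lossA
    have hs' : (2 : ℝ) ≤ s := by exact_mod_cast hs
    have : (1 : ℝ) ≤ 2 ^ k := one_le_pow₀ (by norm_num)
    rw [div_le_one (by positivity)]
    nlinarith
  induction m with
  | zero =>
    intro 𝒜 G hm hG hMI
    rcases one_round hk hs hn hG 𝒜 with ⟨J, hJ, _⟩ | ⟨H, hHG, h1, h2⟩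
    · rw [Finset.card_eq_zero] at hm
      subst hm
      simp at hJ
    · refine ⟨H, hHG, by simpa using h1, superHom_of hk hG hHG ?_⟩
      intro J hJ
      exact h2 J (hMI (MI_mono hHG hJ))
  | succ m ih =>
    intro 𝒜 G hm hG hMI
    rcases one_round hk hs hn hG 𝒜 with ⟨J, hJ, T, hT, hJT, hcard⟩ | ⟨H, hHG, h1, h2⟩
    · obtain ⟨F', hF', hc, hSH⟩ := ih (𝒜.erase J) T (by rw [Finset.card_erase_of_mem hJ, hm]; rfl)
        (hG.mono hT) (by
          intro J' hJ'
          rw [Finset.mem_erase]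
          exact ⟨fun e => hJT (e ▸ hJ'), hMI (MI_mono hT hJ')⟩)
      refine ⟨F', hF'.trans hT, le_trans ?_ hc, hSH⟩
      calc lossA k s ^ (m + 1 + 1) * G.card = lossA k s ^ (m + 1) * (lossA k s * G.card) := by ring
        _ ≤ _ := mul_le_mul_of_nonneg_left hcard (by positivity)
    · refine ⟨H, hHG, le_trans ?_ h1, superHom_of hk hG hHG ?_⟩
      · apply mul_le_mul_of_nonneg_right _ (Nat.cast_nonneg _)
        exact pow_le_of_le_one a0 a1 (by omega)
      · intro J hJ
        exact h2 J (hMI (MI_mono hHG hJ))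

/-- Number of colourings that are injective on a given `k`-set. -/
theorem count_rainbow {V : Type} [Fintype V] {k : ℕ} (E : Finset V) (hE : E.card = k) :
    (Finset.univ.filter fun f : V → Fin k => Set.InjOn f E).card * k ^ k =
      k.factorial * k ^ Fintype.card V := by
  classical
  have e : {f : V → Fin k // Set.InjOn f E} ≃
      {g : {x // x ∈ E} → Fin k // Function.Injective g} × ({x // x ∉ E} → Fin k) :=
    ((Equiv.piEquivPiSubtypeProd (fun x => x ∈ E) (fun _ => Fin k)).subtypeEquiv
      (q := fun p => Function.Injective p.1) (by
        intro f
        rw [Set.injOn_iff_injective]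
        rfl)).trans
      (Equiv.prodSubtypeFstEquivSubtypeProd
        (p := fun g : {x // x ∈ E} → Fin k => Function.Injective g))
  have h1 : (Finset.univ.filter fun f : V → Fin k => Set.InjOn f E).card =
      k.factorial * k ^ (Fintype.card V - k) := by
    rw [← Fintype.card_subtype, Fintype.card_congr e, Fintype.card_prod,
      Fintype.card_congr (Equiv.subtypeInjectiveEquivEmbedding _ _), Fintype.card_embedding_eq,
      Fintype.card_fun, Fintype.card_fin, Fintype.card_coe, hE, Nat.descFactorial_self,
      Fintype.card_subtype_compl, Fintype.card_coe, hE]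
  rw [h1, mul_assoc, ← pow_add, Nat.sub_add_cancel]
  rw [← hE]
  exact Finset.card_le_univ E

theorem double_count {V : Type} [Fintype V] {k : ℕ} (F : Finset (Finset V))
    (hF : ∀ E ∈ F, E.card = k) (hk : 0 < k) :
    ∃ f : V → Fin k, k.factorial * F.card ≤
      (F.filter fun E : Finset V => Set.InjOn f (E : Set V)).card * k ^ k := by
  have : Nonempty (Fin k) := ⟨⟨0, hk⟩⟩
  by_contra hcon
  push Not at hcon
  have h1 : ∑ f : V → Fin k, (F.filter fun E : Finset V => Set.InjOn f (E : Set V)).card * k ^ k <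
      ∑ _f : V → Fin k, k.factorial * F.card :=
    Finset.sum_lt_sum_of_nonempty Finset.univ_nonempty (fun f _ => hcon f)
  have h2 : ∑ f : V → Fin k, (F.filter fun E : Finset V => Set.InjOn f (E : Set V)).card =
      ∑ E ∈ F, (Finset.univ.filter fun f : V → Fin k => Set.InjOn f E).card :=
    Finset.sum_card_bipartiteAbove_eq_sum_card_bipartiteBelow
      (fun (f : V → Fin k) (E : Finset V) => Set.InjOn f E)
  rw [← Finset.sum_mul, h2, Finset.sum_mul,
    Finset.sum_congr rfl (fun E hE => count_rainbow E (hF E hE)),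
    Finset.sum_const, Finset.sum_const, smul_eq_mul, smul_eq_mul, Finset.card_univ,
    Fintype.card_fun, Fintype.card_fin] at h1
  apply lt_irrefl _ (lt_of_lt_of_eq h1 _)
  ring

theorem exists_partite {k n : ℕ} (hk : 2 ≤ k) (F : Finset (Finset ℕ)) (hF : IsKGraphOn k n F) :
    ∃ G ⊆ F, ∃ X : Fin k → Finset ℕ, GoodPart k n G X ∧
      (k.factorial : ℝ) / (k : ℝ) ^ k * F.card ≤ G.card := by
  let V := {x // x ∈ vtx n}
  let R : (V → Fin k) → Finset ℕ → Prop := fun f E => Set.InjOn f (E.subtype (· ∈ vtx n))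
  have hinj : Set.InjOn (fun E : Finset ℕ => E.subtype (· ∈ vtx n)) F := by
    intro A hA B hB hAB
    have hAB' : A.subtype (· ∈ vtx n) = B.subtype (· ∈ vtx n) := hAB
    have h1 := congrArg (Finset.map (Function.Embedding.subtype (· ∈ vtx n))) hAB'
    rwa [Finset.subtype_map_of_mem (fun x hx => (hF A hA).1 hx),
      Finset.subtype_map_of_mem (fun x hx => (hF B hB).1 hx)] at h1
  obtain ⟨f, hf⟩ := double_count (k := k)
    (F.image (fun E : Finset ℕ => E.subtype (· ∈ vtx n))) (by
      intro E' hE'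
      obtain ⟨E, hE, rfl⟩ := Finset.mem_image.1 hE'
      rw [Finset.card_subtype, Finset.filter_true_of_mem (fun x hx => (hF E hE).1 hx)]
      exact (hF E hE).2) (by omega)
  rw [Finset.card_image_of_injOn hinj, Finset.filter_image] at hf
  replace hf : k.factorial * F.card ≤ (F.filter fun E => R f E).card * k ^ k :=
    hf.trans (Nat.mul_le_mul_right _ Finset.card_image_le)
  refine ⟨F.filter fun E => R f E, Finset.filter_subset _ _,
    fun i => (vtx n).filter fun x => ∃ h : x ∈ vtx n, f ⟨x, h⟩ = i, ?_, ?_⟩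
  · refine ⟨?_, ?_, ?_, fun i => Finset.filter_subset _ _⟩
    · intro i j hij
      rw [Finset.disjoint_left]
      intro x hx hx'
      obtain ⟨h, h1⟩ := (Finset.mem_filter.1 hx).2
      obtain ⟨h', h2⟩ := (Finset.mem_filter.1 hx').2
      exact hij (h1.symm.trans h2)
    · intro E hE i
      rw [Finset.mem_filter] at hE
      obtain ⟨hEF, hR⟩ := hE
      obtain ⟨hsub, hcard⟩ := hF E hEF
      have hc : (E.subtype (· ∈ vtx n)).card = k := by
        rw [Finset.card_subtype, Finset.filter_true_of_mem (fun x hx => hsub hx), hcard]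
      have himg : (E.subtype (· ∈ vtx n)).image f = Finset.univ := by
        rw [← Finset.card_eq_iff_eq_univ, Finset.card_image_of_injOn hR, hc, Fintype.card_fin]
      have hi : i ∈ (E.subtype (· ∈ vtx n)).image f := by rw [himg]; exact Finset.mem_univ i
      obtain ⟨x, hx, hxi⟩ := Finset.mem_image.1 hi
      rw [Finset.card_eq_one]
      refine ⟨x.1, ?_⟩
      ext y
      simp only [Finset.mem_inter, Finset.mem_filter, Finset.mem_singleton]
      constructor
      · rintro ⟨hy, _, hy', hfy⟩
        have : (⟨y, hy'⟩ : V) = x := hR (Finset.mem_coe.2 (Finset.mem_subtype.2 hy)) (Finset.mem_coe.2 hx)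
          (hfy.trans hxi.symm)
        exact congrArg Subtype.val this
      · rintro rfl
        exact ⟨by simpa using hx, x.2, x.2, hxi⟩
    · intro E hE x hx
      rw [Finset.mem_filter] at hE
      have hxv := (hF E hE.1).1 hx
      exact ⟨f ⟨x, hxv⟩, Finset.mem_filter.2 ⟨hxv, hxv, rfl⟩⟩
  · have hk0 : (0 : ℝ) < (k : ℝ) ^ k := by
      have : (0 : ℝ) < k := by exact_mod_cast (by omega : 0 < k)
      positivity
    rw [div_mul_eq_mul_div, div_le_iff₀ hk0]
    exact_mod_cast hf

/-- Super-homogeneous Subfamily Lemma: every `k`-graph `F` on `[n]` contains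
a `k`-partite subgraph `F'` with `|F'| ≥ c(k,s)·|F|` that is `s`-super-homogeneous. -/
theorem stmt_4 (k s n : ℕ) (hk : 2 ≤ k) (hs : 2 ≤ s) (hsk : 2 * k ≤ s)
    (F : Finset (Finset ℕ)) (hF : IsKGraphOn k n F) :
    ∃ F' ⊆ F, ∃ X : Fin k → Finset ℕ,
      IsKPartition k F' X ∧
      cks k s * (F.card : ℝ) ≤ (F'.card : ℝ) ∧
      SuperHomogeneous n k s F' X := by
  rcases F.eq_empty_or_nonempty with hF0 | ⟨E0, hE0⟩
  · subst hF0
    refine ⟨∅, subset_rfl, fun _ => ∅, ⟨by simp, by simp⟩, by simp, ?_⟩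
    intro J _ E hE
    simp at hE
  have hn : 0 < n := by
    obtain ⟨h1, h2⟩ := hF E0 hE0
    have h3 := Finset.card_le_card h1
    simp only [vtx, Nat.card_Icc] at h3
    omega
  obtain ⟨G, hGF, X, hG, hc⟩ := exists_partite hk F hF
  obtain ⟨F', hF', hc', hSH⟩ := rounds (s := s) hk hs hn _ (MI G X) G rfl hG subset_rfl
  refine ⟨F', hF'.trans hGF, X, ⟨hG.disj, (hG.mono hF').one⟩, ?_, hSH⟩
  refine le_trans ?_ hc'
  have a0 : 0 ≤ lossA k s := by unfold lossA; positivity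
  have a1 : lossA k s ≤ 1 := by
    unfold lossA
    have hs' : (2 : ℝ) ≤ s := by exact_mod_cast hs
    have : (1 : ℝ) ≤ 2 ^ k := one_le_pow₀ (by norm_num)
    rw [div_le_one (by positivity)]
    nlinarith
  have hm : (MI G X).card + 1 ≤ 2 ^ k := by
    have h1 : MI G X ⊂ Finset.univ := by
      rw [Finset.ssubset_univ_iff]
      intro e
      exact univ_not_mem_MI hG (e ▸ Finset.mem_univ _)
    have h2 := Finset.card_lt_card h1
    simpa using h2
  have hck : cks k s = (k.factorial : ℝ) / (k : ℝ) ^ k * lossA k s ^ (2 ^ k) := by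
    unfold cks lossA
    rw [div_pow, one_pow, div_mul_div_comm, mul_one]
  calc cks k s * F.card = lossA k s ^ (2 ^ k) * ((k.factorial : ℝ) / (k : ℝ) ^ k * F.card) := by
        rw [hck]; ring
    _ ≤ lossA k s ^ (2 ^ k) * G.card := mul_le_mul_of_nonneg_left hc (by positivity)
    _ ≤ _ := mul_le_mul_of_nonneg_right (pow_le_pow_of_le_one a0 a1 hm) (Nat.cast_nonneg _)
end

section
/- Let s, k ≥ 2 be integers with s ≥ 2k, and let F be an s-super-homogeneous k-partite k-graph on [n] with a fixed k-partition (X_1,...,X_k). Then MI(F) is closed under intersection: for all J, J' ∈ MI(F), also J ∩ J' ∈ MI(F). -/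
open Finset Filter

attribute [local instance] Classical.propDecidable

theorem strong_avoid (s : ℕ) (hs : 2 ≤ s) (F : Finset (Finset ℕ)) (D W : Finset ℕ)
    (hD : SStrong s F D) (hW : W.card ≤ s) (hdis : Disjoint D W) :
    ∃ B ∈ F, D ⊆ B ∧ Disjoint B W := by
  obtain ⟨hne, hdeg⟩ := hD
  by_contra hcon
  push Not at hcon
  have hsub : link F D ⊆ W.biUnion fun v => (link F D).filter fun E => v ∈ E := by
    intro L hL
    have hL' := hL
    unfold link at hL'
    rw [Finset.mem_image] at hL'
    obtain ⟨B, hB, rfl⟩ := hL'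
    rw [Finset.mem_filter] at hB
    have h := hcon B hB.1 hB.2
    rw [Finset.not_disjoint_iff] at h
    obtain ⟨v, hvB, hvW⟩ := h
    rw [Finset.mem_biUnion]
    refine ⟨v, hvW, Finset.mem_filter.2 ⟨hL, Finset.mem_sdiff.2 ⟨hvB, ?_⟩⟩⟩
    intro hvD
    exact (Finset.disjoint_left.1 hdis) hvD hvW
  have h1 : (link F D).card ≤ ∑ v ∈ W, vdeg (link F D) v :=
    (Finset.card_le_card hsub).trans Finset.card_biUnion_le
  have h2 : s * (link F D).card ≤ ∑ v ∈ W, ((link F D).card - 1) := by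
    calc s * (link F D).card ≤ s * ∑ v ∈ W, vdeg (link F D) v := Nat.mul_le_mul_left _ h1
      _ = ∑ v ∈ W, s * vdeg (link F D) v := Finset.mul_sum _ _ _
      _ ≤ _ := Finset.sum_le_sum fun v _ => Nat.le_sub_one_of_lt (hdeg v)
  rw [Finset.sum_const, smul_eq_mul] at h2
  have h3 := Nat.mul_le_mul_right ((link F D).card - 1) hW
  have h4 := Finset.card_pos.2 hne
  have h5 := Nat.le_of_mul_le_mul_left (h2.trans h3) (by omega)
  omega

/-- for an `s`-super-homogeneous `k`-partite `k`-graph, `MI(F)` is closed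
under intersection. -/
theorem stmt_5 (k s n : ℕ) (hk : 2 ≤ k) (hs : 2 ≤ s) (hsk : 2 * k ≤ s)
    (F : Finset (Finset ℕ)) (X : Fin k → Finset ℕ)
    (hF : IsKGraphOn k n F) (hpart : IsKPartition k F X)
    (hsh : SuperHomogeneous n k s F X) :
    ∀ J ∈ MI F X, ∀ J' ∈ MI F X, J ∩ J' ∈ MI F X := by
  intro J hJ J' hJ'
  have hJ0 := hJ
  unfold MI at hJ0
  rw [Finset.mem_image] at hJ0
  obtain ⟨⟨E, E'⟩, hE, -⟩ := hJ0
  rw [Finset.mem_filter, Finset.mem_product] at hE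
  replace hE : E ∈ F := hE.1.1
  have hEc := (hF E hE).2
  obtain ⟨A, hA, hDA, hAW⟩ := strong_avoid s hs F (projJ X J E) (E \ projJ X J E)
    (hsh J hJ E hE).1 ((Finset.card_le_card Finset.sdiff_subset).trans (by omega))
    Finset.disjoint_sdiff
  have hAc := (hF A hA).2
  obtain ⟨B, hB, hDB, hBW⟩ := strong_avoid s hs F (projJ X J' E) ((A ∪ E) \ projJ X J' E)
    (hsh J' hJ' E hE).1
    ((Finset.card_le_card Finset.sdiff_subset).trans ((Finset.card_union_le _ _).trans (by omega)))
    Finset.disjoint_sdiff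
  rw [Finset.disjoint_left] at hAW hBW
  have key : ∀ v, v ∈ A ∩ B ↔ v ∈ projJ X J E ∧ v ∈ projJ X J' E := by
    intro v
    have a1 := @hAW v
    have a2 := @hBW v
    have a3 := @hDA v
    have a4 := @hDB v
    have a5 : v ∈ projJ X J' E → v ∈ E := fun h => (Finset.mem_inter.1 h).1
    simp only [Finset.mem_sdiff, Finset.mem_union, Finset.mem_inter] at *
    tauto
  unfold MI
  rw [Finset.mem_image]
  refine ⟨(A, B), Finset.mem_filter.2 ⟨Finset.mem_product.2 ⟨hA, hB⟩, ?_⟩, ?_⟩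
  · intro hAB
    replace hAB : A = B := hAB
    subst hAB
    have hsub : A ⊆ projJ X J' E := fun v hv => ((key v).1 (by simpa using hv)).2
    have heq : projJ X J' E = A := Finset.Subset.antisymm hDB hsub
    have h2 := (hsh J' hJ' E hE).2.1
    rw [heq] at h2
    have h3 : setDeg F A ≤ 1 := by
      unfold setDeg link
      refine Finset.card_image_le.trans (Finset.card_le_one.2 ?_)
      have h4 : ∀ C ∈ F.filter (fun E => A ⊆ E), C = A := by
        intro C hC
        rw [Finset.mem_filter] at hC
        exact (Finset.eq_of_subset_of_card_le hC.2 (by rw [(hF C hC.1).2, hAc])).symm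
      intro a ha b hb
      rw [h4 a ha, h4 b hb]
    omega
  · ext i
    unfold pattern
    rw [Finset.mem_filter, Finset.mem_inter]
    simp only [Finset.mem_univ, true_and]
    have huniq : ∀ (K : Finset (Fin k)) (v : ℕ), v ∈ X i → v ∈ projJ X K E → i ∈ K := by
      intro K v hvi hv
      have h := (Finset.mem_inter.1 hv).2
      rw [Finset.mem_sup] at h
      obtain ⟨j, hj, hvj⟩ := h
      by_cases hij : i = j
      · rwa [hij]
      · exact absurd hvj (Finset.disjoint_left.1 (hpart.1 i j hij) hvi)
    constructor
    · rintro ⟨v, hv⟩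
      rw [Finset.mem_inter] at hv
      have h := (key v).1 hv.1
      exact ⟨huniq J v hv.2 h.1, huniq J' v hv.2 h.2⟩
    · rintro ⟨hi, hi'⟩
      have h1 := hpart.2 E hE i
      obtain ⟨v, hv⟩ := Finset.card_pos.1 (h1 ▸ Nat.one_pos)
      rw [Finset.mem_inter] at hv
      refine ⟨v, Finset.mem_inter.2 ⟨(key v).2 ⟨?_, ?_⟩, hv.2⟩⟩
      · exact Finset.mem_inter.2 ⟨hv.1, Finset.mem_sup.2 ⟨i, hi, hv.2⟩⟩
      · exact Finset.mem_inter.2 ⟨hv.1, Finset.mem_sup.2 ⟨i, hi', hv.2⟩⟩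
end

section
/- Let s, k ≥ 2 be integers with s ≥ 2k, and let F be an s-super-homogeneous k-partite k-graph on [n] with a fixed k-partition. If MI(F) has rank m, then |F| ≤ C(n,m). -/
open Finset Filter

attribute [local instance] Classical.propDecidable

/-- if `MI(F)` has rank `m` then `|F| ≤ C(n,m)`. -/
theorem stmt_6 (k s n m : ℕ) (hk : 2 ≤ k) (hs : 2 ≤ s) (hsk : 2 * k ≤ s)
    (F : Finset (Finset ℕ)) (X : Fin k → Finset ℕ)
    (hF : IsKGraphOn k n F) (hpart : IsKPartition k F X)
    (hsh : SuperHomogeneous n k s F X)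
    (hm : rankFam k (MI F X) = m) :
    F.card ≤ n.choose m := by
  classical
  obtain ⟨hdis, hone⟩ := hpart
  have hcard : ∀ E ∈ F, ∀ D : Finset (Fin k), (projJ X D E).card = D.card := by
    intro E hE D
    have h1 : projJ X D E = D.biUnion fun i => E ∩ X i := by
      ext v
      simp only [projJ, Finset.mem_inter, Finset.mem_sup, Finset.mem_biUnion]
      constructor
      · rintro ⟨h, i, hi, hv⟩
        exact ⟨i, hi, h, hv⟩
      · rintro ⟨i, hi, h, hv⟩
        exact ⟨h, i, hi, hv⟩
    rw [h1, Finset.card_biUnion]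
    · rw [Finset.sum_congr rfl fun i _ => hone E hE i]
      simp
    · intro i _ j _ hij
      exact (hdis i j hij).mono Finset.inter_subset_right Finset.inter_subset_right
  have key : ∀ D : Finset (Fin k), ∀ E ∈ F, ∀ E' ∈ F, E ≠ E' →
      projJ X D E = projJ X D E' → ∃ J ∈ MI F X, D ⊆ J := by
    intro D E hE E' hE' hne heq
    refine ⟨pattern X (E ∩ E'), ?_, ?_⟩
    · refine Finset.mem_image.2 ⟨(E, E'), ?_, rfl⟩
      simp [hE, hE', hne]
    · intro i hi
      obtain ⟨v, hv⟩ := Finset.card_pos.1 (by rw [hone E hE i]; exact Nat.one_pos)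
      rw [Finset.mem_inter] at hv
      have hv' : v ∈ projJ X D E := by
        simp only [projJ, Finset.mem_inter, Finset.mem_sup]
        exact ⟨hv.1, i, hi, hv.2⟩
      rw [heq] at hv'
      have hvE' : v ∈ E' := (Finset.mem_inter.1 hv').1
      simp only [pattern, Finset.mem_filter, Finset.mem_univ, true_and]
      exact ⟨v, by simp [hv.1, hv.2, hvE']⟩
  have hfull : ∀ J ∈ MI F X, ¬ (Finset.univ : Finset (Fin k)) ⊆ J := by
    intro J hJ hsub
    obtain ⟨⟨E, E'⟩, hp, rfl⟩ := Finset.mem_image.1 hJ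
    simp only [Finset.mem_filter, Finset.mem_product] at hp
    obtain ⟨⟨hE, hE'⟩, hne⟩ := hp
    have hsame : ∀ A ∈ F, ∀ B ∈ F, (∀ i, ((A ∩ B) ∩ X i).Nonempty) → A ⊆ B := by
      intro A hA B hB h v hv
      have hall : projJ X Finset.univ A = A :=
        Finset.eq_of_subset_of_card_le Finset.inter_subset_left
          (by rw [hcard A hA, (hF A hA).2]; simp)
      rw [← hall] at hv
      simp only [projJ, Finset.mem_inter, Finset.mem_sup] at hv
      obtain ⟨hvA, i, _, hvi⟩ := hv
      obtain ⟨w, hw⟩ := h i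
      simp only [Finset.mem_inter] at hw
      have := Finset.card_le_one.1 (hone A hA i).le v (by simp [hvA, hvi]) w
        (by simp [hw.1.1, hw.2])
      rw [this]
      exact hw.1.2
    have hall : ∀ i, ((E ∩ E') ∩ X i).Nonempty := by
      intro i
      have := hsub (Finset.mem_univ i)
      simpa [pattern] using this
    exact hne (Finset.Subset.antisymm (hsame E hE E' hE' hall)
      (hsame E' hE' E hE (by intro i; rw [Finset.inter_comm E' E]; exact hall i)))
  have hmem : m ∈ {d | ∃ D : Finset (Fin k), D.card = d ∧ ∀ J ∈ MI F X, ¬ D ⊆ J} := by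
    rw [← hm]
    exact Nat.sInf_mem ⟨_, Finset.univ, rfl, hfull⟩
  obtain ⟨D, hDm, hD⟩ := hmem
  have hle : F.card ≤ ((vtx n).powersetCard m).card := by
    refine Finset.card_le_card_of_injOn (projJ X D) ?_ ?_
    · intro E hE
      have hE : E ∈ F := hE
      exact Finset.mem_coe.2 (Finset.mem_powersetCard.2
        ⟨Finset.inter_subset_left.trans (hF E hE).1, by rw [hcard E hE, hDm]⟩)
    · intro E hE E' hE' heq
      by_contra hne
      obtain ⟨J, hJ, hDJ⟩ := key D E hE E' hE' hne heq
      exact hD J hJ hDJ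
  simpa [vtx] using hle
end

section
/- Let k ≥ 3 be an integer and let J be a family of proper subsets of [k] that is closed under intersection and has rank at least k−1. Then at least one of the following holds: (1) there exists B ⊆ [k] with |B| = k−2 such that every subset of B belongs to J; or (2) there exists a unique i ∈ [k] such that every proper subset D of [k] with i ∈ D belongs to J, and no subset D of [k] with i ∉ D and |D| ≥ k−2 belongs to J. -/
open Finset Filter

attribute [local instance] Classical.propDecidable

theorem cover_aux {k : ℕ} (P : Finset (Fin k) → Prop)
    (hu : ∀ A B, P A → P B → P (A ∪ B)) (T T0 : Finset (Fin k)) (h0 : P T0) (hT : T0 ⊆ T)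
    (h : ∀ z ∈ T, ∃ R, z ∈ R ∧ R ⊆ T ∧ P R) : P T := by
  have key : ∀ S : Finset (Fin k), S ⊆ T → ∃ R, S ⊆ R ∧ R ⊆ T ∧ P R := by
    intro S
    induction S using Finset.induction_on with
    | empty => exact fun _ => ⟨T0, Finset.empty_subset _, hT, h0⟩
    | insert a S ha ih =>
      intro hS
      obtain ⟨R, h1, h2, h3⟩ := ih ((Finset.subset_insert _ _).trans hS)
      obtain ⟨R', g1, g2, g3⟩ := h a (hS (Finset.mem_insert_self _ _))
      refine ⟨R ∪ R', ?_, Finset.union_subset h2 g2, hu _ _ h3 g3⟩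
      intro w hw
      rcases Finset.mem_insert.1 hw with rfl | hw
      · exact Finset.mem_union_right _ g1
      · exact Finset.mem_union_left _ (h1 hw)
  obtain ⟨R, h1, h2, h3⟩ := key T (Finset.Subset.refl _)
  rwa [Finset.Subset.antisymm h1 h2]

/-- structure of intersection-closed families of proper subsets of `[k]` of
rank at least `k−1`: type 1 or type 2 (with a unique central index). -/
theorem stmt_7 (k : ℕ) (hk : 3 ≤ k) (𝒥 : Finset (Finset (Fin k)))
    (hproper : ∀ J ∈ 𝒥, J ≠ Finset.univ)
    (hclosed : ∀ J ∈ 𝒥, ∀ J' ∈ 𝒥, J ∩ J' ∈ 𝒥)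
    (hrank : k - 1 ≤ rankFam k 𝒥) :
    (∃ B : Finset (Fin k), B.card = k - 2 ∧ ∀ S ⊆ B, S ∈ 𝒥) ∨
    (∃! i : Fin k,
      (∀ D : Finset (Fin k), D ≠ Finset.univ → i ∈ D → D ∈ 𝒥) ∧
      (∀ D : Finset (Fin k), i ∉ D → k - 2 ≤ D.card → D ∉ 𝒥)) := by
  have hpair : ∀ x y : Fin k, x ≠ y →
      ({x}ᶜ : Finset (Fin k)) ∈ 𝒥 ∨ ({y}ᶜ : Finset (Fin k)) ∈ 𝒥 ∨
        ({x, y}ᶜ : Finset (Fin k)) ∈ 𝒥 := by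
    intro x y hxy
    have hc : ({x, y}ᶜ : Finset (Fin k)).card = k - 2 := by
      rw [Finset.card_compl, Finset.card_pair hxy, Fintype.card_fin]
    have hex : ∃ J ∈ 𝒥, ({x, y}ᶜ : Finset (Fin k)) ⊆ J := by
      by_contra hcon
      push Not at hcon
      have : rankFam k 𝒥 ≤ k - 2 := Nat.sInf_le ⟨_, hc, hcon⟩
      omega
    obtain ⟨J, hJ, hsub⟩ := hex
    have hm : ∀ z, z ≠ x → z ≠ y → z ∈ J := fun z h1 h2 => hsub (by simp [h1, h2])
    by_cases hx : x ∈ J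
    · by_cases hy : y ∈ J
      · exfalso
        apply hproper J hJ
        ext z
        by_cases h1 : z = x
        · simp [h1, hx]
        · by_cases h2 : z = y
          · simp [h2, hy]
          · simp [hm z h1 h2]
      · right; left
        convert hJ
        ext z
        by_cases h1 : z = x
        · simp [h1, hx, hxy]
        · by_cases h2 : z = y
          · simp [h2, hy]
          · simp [hm z h1 h2, h2]
    · by_cases hy : y ∈ J
      · left
        convert hJ
        ext z
        by_cases h1 : z = x
        · simp [h1, hx]
        · by_cases h2 : z = y
          · simp [h2, hy, Ne.symm hxy]
          · simp [hm z h1 h2, h1]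
      · right; right
        convert hJ
        ext z
        by_cases h1 : z = x
        · simp [h1, hx]
        · by_cases h2 : z = y
          · simp [h2, hy]
          · simp [hm z h1 h2, h1, h2]
  have hu : ∀ A B : Finset (Fin k), Aᶜ ∈ 𝒥 → Bᶜ ∈ 𝒥 → (A ∪ B)ᶜ ∈ 𝒥 := by
    intro A B hA hB
    rw [Finset.compl_union]
    exact hclosed _ hA _ hB
  have type1 : ∀ x y : Fin k, x ≠ y → ({x, y}ᶜ : Finset (Fin k)) ∈ 𝒥 →
      (∀ z, z ≠ x → ({z}ᶜ : Finset (Fin k)) ∈ 𝒥 ∨ ({x, z}ᶜ : Finset (Fin k)) ∈ 𝒥) →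
      ∃ B : Finset (Fin k), B.card = k - 2 ∧ ∀ S ⊆ B, S ∈ 𝒥 := by
    intro x y hxy hP hz
    refine ⟨({x, y}ᶜ : Finset (Fin k)), ?_, ?_⟩
    · rw [Finset.card_compl, Finset.card_pair hxy, Fintype.card_fin]
    · intro S hS
      have hT : ({x, y} : Finset (Fin k)) ⊆ Sᶜ := by
        rw [← compl_compl ({x, y} : Finset (Fin k))]
        exact Finset.compl_subset_compl.2 hS
      have hxS : x ∈ Sᶜ := hT (by simp)
      have := cover_aux (fun A => Aᶜ ∈ 𝒥) hu Sᶜ {x, y} hP hT (by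
        intro z hzS
        by_cases hzx : z = x
        · exact ⟨{x, y}, by simp [hzx], hT, hP⟩
        · rcases hz z hzx with h | h
          · exact ⟨{z}, by simp, by simpa using hzS, h⟩
          · refine ⟨{x, z}, by simp, ?_, h⟩
            intro w hw
            rcases Finset.mem_insert.1 hw with rfl | hw
            · exact hxS
            · rw [Finset.mem_singleton.1 hw]; exact hzS)
      simpa using this
  by_cases hall : ∀ x : Fin k, ({x}ᶜ : Finset (Fin k)) ∈ 𝒥
  · left
    have hne : (⟨0, by omega⟩ : Fin k) ≠ ⟨1, by omega⟩ := by simp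
    refine type1 _ _ hne ?_ (fun z _ => Or.inl (hall z))
    rw [Finset.insert_eq]
    exact hu _ _ (hall _) (hall _)
  push Not at hall
  obtain ⟨x, hx⟩ := hall
  have hz : ∀ z, z ≠ x → ({z}ᶜ : Finset (Fin k)) ∈ 𝒥 ∨ ({x, z}ᶜ : Finset (Fin k)) ∈ 𝒥 := by
    intro z hzx
    rcases hpair x z (Ne.symm hzx) with h | h
    · exact absurd h hx
    · exact h
  by_cases hy : ∃ y, x ≠ y ∧ ({x, y}ᶜ : Finset (Fin k)) ∈ 𝒥
  · obtain ⟨y, hxy, h⟩ := hy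
    exact Or.inl (type1 x y hxy h hz)
  right
  push Not at hy
  have hM : ∀ z, z ≠ x → ({z}ᶜ : Finset (Fin k)) ∈ 𝒥 := fun z hzx =>
    (hz z hzx).resolve_right (hy z (Ne.symm hzx))
  have hD1 : ∀ D : Finset (Fin k), D ≠ Finset.univ → x ∈ D → D ∈ 𝒥 := by
    intro D hD hxD
    obtain ⟨w, hw⟩ : ∃ w, w ∉ D := by
      by_contra hcon
      push Not at hcon
      exact hD (Finset.eq_univ_iff_forall.2 hcon)
    have hne : ∀ z, z ∉ D → z ≠ x := fun z h e => h (e ▸ hxD)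
    have := cover_aux (fun A => Aᶜ ∈ 𝒥) hu Dᶜ {w} (hM w (hne w hw)) (by simpa using hw) (by
      intro z hzD
      exact ⟨{z}, by simp, by simpa using hzD, hM z (hne z (by simpa using hzD))⟩)
    simpa using this
  refine ⟨x, ⟨hD1, ?_⟩, ?_⟩
  · intro D hxD hcard hD
    have hsum := Finset.card_add_card_compl D
    rw [Fintype.card_fin] at hsum
    have hxc : x ∈ Dᶜ := by simpa using hxD
    have he := Finset.card_erase_of_mem hxc
    have hins := Finset.insert_erase hxc
    have hle : (Dᶜ.erase x).card ≤ 1 := by omega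
    haveI : Nonempty (Fin k) := ⟨x⟩
    rcases Finset.card_le_one_iff_subset_singleton.1 hle with ⟨y, hys⟩
    rcases Finset.subset_singleton_iff.1 hys with h | h
    · rw [h] at hins
      apply hx
      have : ({x} : Finset (Fin k)) = Dᶜ := by simpa using hins
      rw [this, compl_compl]
      exact hD
    · rw [h] at hins
      have hyx : y ∈ Dᶜ.erase x := by rw [h]; simp
      apply hy y (Ne.symm (Finset.ne_of_mem_erase hyx))
      rw [hins, compl_compl]
      exact hD
  · rintro i ⟨-, h2⟩
    by_contra hne
    refine h2 ({i}ᶜ) (by simp) ?_ (hM i hne)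
    rw [Finset.card_compl, Finset.card_singleton, Fintype.card_fin]
    omega
end

section
/- Let k ≥ 2 be an integer and let F be a nonempty k-graph on [n]. Then F contains a nonempty subgraph F' with |F'| ≥ (1/2)·|F| such that for each i = 1,...,k−1, every i-element vertex set that is contained in at least one edge of F' is contained in at least (1/(2k))·|F|/C(n,i) edges of F'. -/
open Finset Filter

attribute [local instance] Classical.propDecidable

lemma setDeg_eq_filter_card (F : Finset (Finset ℕ)) (D : Finset ℕ) :
    setDeg F D = (F.filter fun E => D ⊆ E).card := by
  unfold setDeg link
  apply Finset.card_image_of_injOn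
  intro A hA B hB h
  simp only [Finset.coe_filter, Set.mem_ofPred_eq] at hA hB
  simp only at h
  rw [← Finset.sdiff_union_of_subset hA.2, ← Finset.sdiff_union_of_subset hB.2, h]

/-- The sets of size `i` in `[n]` covered by an edge of `G`. -/
noncomputable def covered (n i : ℕ) (G : Finset (Finset ℕ)) : Finset (Finset ℕ) :=
  ((vtx n).powersetCard i).filter fun D => ∃ E ∈ G, D ⊆ E

lemma covered_mono (n i : ℕ) {G H : Finset (Finset ℕ)} (h : G ⊆ H) :
    covered n i G ⊆ covered n i H := by
  intro D hD
  simp only [covered, Finset.mem_filter] at hD ⊢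
  obtain ⟨h1, E, hE, h2⟩ := hD
  exact ⟨h1, E, h hE, h2⟩

/-- every nonempty `k`-graph contains a subgraph with at least half the edges
in which every `i`-set (`1 ≤ i ≤ k−1`) contained in an edge has degree at least
`(1/(2k))·|F|/C(n,i)`. -/
theorem stmt_9 (k n : ℕ) (hk : 2 ≤ k) (F : Finset (Finset ℕ)) (hF : IsKGraphOn k n F)
    (hne : F.Nonempty) :
    ∃ F' ⊆ F, F'.Nonempty ∧ (F.card : ℝ) / 2 ≤ (F'.card : ℝ) ∧
      ∀ i : ℕ, 1 ≤ i → i ≤ k - 1 → ∀ D : Finset ℕ, D.card = i →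
        (∃ E ∈ F', D ⊆ E) →
        (1 / (2 * (k : ℝ))) * (F.card : ℝ) / (n.choose i : ℝ) ≤ (setDeg F' D : ℝ) := by
  set w : ℕ → ℝ := fun i => (1 / (2 * (k : ℝ))) * (F.card : ℝ) / (n.choose i : ℝ) with hw
  have hw0 : ∀ i, 0 ≤ w i := fun i => by simp only [hw]; positivity
  have hk0 : (0 : ℝ) < k := by exact_mod_cast (by omega : 0 < k)
  have hF0 : (0 : ℝ) < F.card := by exact_mod_cast hne.card_pos
  set S : Finset (Finset ℕ) → ℝ :=
    fun G => ∑ i ∈ Finset.Icc 1 (k - 1), ((covered n i G).card : ℝ) * w i with hS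
  have hS0 : ∀ G, 0 ≤ S G := fun G =>
    Finset.sum_nonneg fun i _ => mul_nonneg (Nat.cast_nonneg _) (hw0 i)
  have hSF : S F ≤ (F.card : ℝ) / 2 := by
    have h1 : ∀ i ∈ Finset.Icc 1 (k - 1),
        ((covered n i F).card : ℝ) * w i ≤ (1 / (2 * (k : ℝ))) * (F.card : ℝ) := by
      intro i _
      have hc : ((covered n i F).card : ℝ) ≤ (n.choose i : ℝ) := by
        have := Finset.card_filter_le ((vtx n).powersetCard i) (fun D => ∃ E ∈ F, D ⊆ E)
        rw [Finset.card_powersetCard] at this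
        simp only [vtx, Nat.card_Icc, Nat.add_sub_cancel] at this
        exact_mod_cast this
      rcases Nat.eq_zero_or_pos (n.choose i) with h0 | h0
      · simp only [hw, h0]
        simp only [Nat.cast_zero, div_zero, mul_zero]
        positivity
      · have h0' : (0 : ℝ) < (n.choose i : ℝ) := by exact_mod_cast h0
        calc ((covered n i F).card : ℝ) * w i ≤ (n.choose i : ℝ) * w i :=
              mul_le_mul_of_nonneg_right hc (hw0 i)
          _ = _ := by simp only [hw]; field_simp
    have h2 := Finset.sum_le_card_nsmul _ _ _ h1
    rw [Nat.card_Icc, nsmul_eq_mul] at h2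
    have h3 : ((k - 1 + 1 - 1 : ℕ) : ℝ) ≤ k := by exact_mod_cast (by omega)
    calc S F ≤ _ := h2
      _ ≤ (k : ℝ) * ((1 / (2 * (k : ℝ))) * (F.card : ℝ)) :=
          mul_le_mul_of_nonneg_right h3 (by positivity)
      _ = _ := by field_simp
  obtain ⟨G, hG, hmax⟩ := Finset.exists_max_image F.powerset
    (fun G => (G.card : ℝ) - S G) ⟨F, Finset.mem_powerset_self F⟩
  rw [Finset.mem_powerset] at hG
  have hGF := hmax F (Finset.mem_powerset_self F)
  have hhalf : (F.card : ℝ) / 2 ≤ (G.card : ℝ) := by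
    have := hS0 G
    linarith
  refine ⟨G, hG, ?_, hhalf, ?_⟩
  · rw [← Finset.card_pos]
    have : (0 : ℝ) < G.card := by linarith
    exact_mod_cast this
  · rintro i hi1 hi2 D hD ⟨E, hE, hDE⟩
    by_contra hlt
    push Not at hlt
    change (setDeg G D : ℝ) < w i at hlt
    rw [setDeg_eq_filter_card] at hlt
    set H := G.filter fun E => ¬ D ⊆ E with hH
    have hHG : H ⊆ G := Finset.filter_subset _ _
    have hm := hmax H (Finset.mem_powerset.2 (hHG.trans hG))
    have hcard : (G.card : ℝ) = ((G.filter fun E => D ⊆ E).card : ℝ) + (H.card : ℝ) := by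
      have := Finset.card_filter_add_card_filter_not (s := G) (fun E => D ⊆ E)
      rw [hH]
      exact_mod_cast this.symm
    have hsum : S H + w i ≤ S G := by
      have himem : i ∈ Finset.Icc 1 (k - 1) := Finset.mem_Icc.2 ⟨hi1, hi2⟩
      simp only [hS]
      rw [← Finset.add_sum_erase _ _ himem, ← Finset.add_sum_erase _ _ himem]
      have hrest : ∑ j ∈ (Finset.Icc 1 (k - 1)).erase i, ((covered n j H).card : ℝ) * w j ≤
          ∑ j ∈ (Finset.Icc 1 (k - 1)).erase i, ((covered n j G).card : ℝ) * w j := by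
        apply Finset.sum_le_sum
        intro j _
        apply mul_le_mul_of_nonneg_right _ (hw0 j)
        exact_mod_cast Finset.card_le_card (covered_mono n j hHG)
      have hss : covered n i H ⊂ covered n i G := by
        refine (Finset.ssubset_iff_of_subset (covered_mono n i hHG)).2 ⟨D, ?_, ?_⟩
        · simp only [covered, Finset.mem_filter, Finset.mem_powersetCard]
          exact ⟨⟨hDE.trans (hF E (hG hE)).1, hD⟩, E, hE, hDE⟩
        · simp only [covered, Finset.mem_filter]
          rintro ⟨_, E', hE', hD'⟩
          rw [hH, Finset.mem_filter] at hE'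
          exact hE'.2 hD'
      have hc : ((covered n i H).card : ℝ) + 1 ≤ ((covered n i G).card : ℝ) := by
        exact_mod_cast Finset.card_lt_card hss
      have := mul_le_mul_of_nonneg_right hc (hw0 i)
      linarith
    linarith
end

section
/- Let k, s, t be positive integers with k, s ≥ 2 and t ≥ 1, and let H be a k-tree with s vertices and t edges. Then there exists a constant η > 0 (depending on H) such that for all sufficiently large n the following holds: if F is a k-graph on [n] with |F| = a·C(n,k−1) and a ≥ 8s·k!, then F contains at least η·a^t·n^{s−t} copies of H (distinct subgraphs of F isomorphic to H). -/
open Finset Filter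

attribute [local instance] Classical.propDecidable

/-! ### Helper lemmas -/

lemma vertexSet_insert' {α : Type} [DecidableEq α] (H : Finset (Finset α)) (E : Finset α) :
    vertexSet (insert E H) = E ∪ vertexSet H := by
  simp [vertexSet, Finset.sup_insert]

lemma subset_vertexSet' {α : Type} [DecidableEq α] {H : Finset (Finset α)} {E : Finset α}
    (h : E ∈ H) : E ⊆ vertexSet H := by
  have : id E ≤ H.sup id := Finset.le_sup h
  exact this

/-- Extend an injective map on `V` to `V ∪ E` with `E` mapped onto `A`. -/
lemma extend_map {α : Type} [DecidableEq α] (φ : α → ℕ) (V E : Finset α) (A : Finset ℕ)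
    (hinj : Set.InjOn φ ↑V) (hcard : A.card = E.card) (hsub : (E ∩ V).image φ ⊆ A)
    (hdisj : Disjoint A (V.image φ \ (E ∩ V).image φ)) :
    ∃ ψ : α → ℕ, (∀ x ∈ V, ψ x = φ x) ∧ (∀ x, x ∉ E ∪ V → ψ x = 0) ∧
      Set.InjOn ψ ↑(E ∪ V) ∧ E.image ψ = A := by
  have hc1 : ((E ∩ V).image φ).card = (E ∩ V).card :=
    Finset.card_image_of_injOn (hinj.mono (by intro x hx; simp at hx; exact hx.2))
  have hc : (E \ V).card = (A \ (E ∩ V).image φ).card := by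
    rw [Finset.card_sdiff_of_subset hsub, hc1, hcard]
    have := Finset.card_sdiff_add_card_inter E V
    omega
  obtain ⟨f, hf⟩ : ∃ f : α → ℕ, Set.BijOn f ↑(E \ V) ↑(A \ (E ∩ V).image φ) := by
    apply Set.Finite.exists_bijOn_of_encard_eq (Finset.finite_toSet _)
    rw [Set.encard_coe_eq_coe_finsetCard, Set.encard_coe_eq_coe_finsetCard, hc]
  have hfA : ∀ x ∈ E, x ∉ V → f x ∈ A ∧ f x ∉ V.image φ := by
    intro x hx hxV
    have h1 : f x ∈ (↑(A \ (E ∩ V).image φ) : Set ℕ) := hf.mapsTo (by simp [hx, hxV])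
    rw [Finset.mem_coe, Finset.mem_sdiff] at h1
    refine ⟨h1.1, fun h2 => ?_⟩
    exact Finset.disjoint_left.1 hdisj h1.1 (Finset.mem_sdiff.2 ⟨h2, h1.2⟩)
  refine ⟨fun x => if x ∈ V then φ x else if x ∈ E then f x else 0, ?_, ?_, ?_, ?_⟩
  · intro x hx; simp [hx]
  · intro x hx
    simp only [Finset.mem_union, not_or] at hx
    simp [hx.1, hx.2]
  · intro x hx y hy hxy
    simp only [Finset.coe_union, Set.mem_union, Finset.mem_coe] at hx hy
    by_cases hxV : x ∈ V <;> by_cases hyV : y ∈ V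
    · simp only [hxV, hyV, if_true] at hxy
      exact hinj hxV hyV hxy
    · have hyE : y ∈ E := by tauto
      simp only [hxV, hyV, hyE, if_true, if_false] at hxy
      exact absurd (hxy ▸ Finset.mem_image_of_mem φ hxV) (hfA y hyE hyV).2
    · have hxE : x ∈ E := by tauto
      simp only [hxV, hyV, hxE, if_true, if_false] at hxy
      exact absurd (hxy ▸ Finset.mem_image_of_mem φ hyV) (hfA x hxE hxV).2
    · have hyE : y ∈ E := by tauto
      have hxE : x ∈ E := by tauto
      simp only [hxV, hyV, hxE, hyE, if_true, if_false] at hxy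
      exact hf.injOn (by simp [hxE, hxV]) (by simp [hyE, hyV]) hxy
  · ext z
    simp only [Finset.mem_image]
    constructor
    · rintro ⟨x, hxE, rfl⟩
      by_cases hxV : x ∈ V
      · simp only [hxV, if_true]
        exact hsub (Finset.mem_image_of_mem φ (Finset.mem_inter.2 ⟨hxE, hxV⟩))
      · simp only [hxV, hxE, if_true, if_false]
        exact (hfA x hxE hxV).1
    · intro hz
      by_cases hz1 : z ∈ (E ∩ V).image φ
      · obtain ⟨x, hx, rfl⟩ := Finset.mem_image.1 hz1
        rw [Finset.mem_inter] at hx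
        exact ⟨x, hx.1, by simp [hx.2]⟩
      · obtain ⟨x, hx, rfl⟩ := hf.surjOn (show z ∈ (↑(A \ (E ∩ V).image φ) : Set ℕ) by
          rw [Finset.mem_coe, Finset.mem_sdiff]; exact ⟨hz, hz1⟩)
        rw [Finset.mem_coe, Finset.mem_sdiff] at hx
        exact ⟨x, hx.1, by simp [hx.1, hx.2]⟩

/-- One step of the embedding count: extend every map of `Φ` by an edge `E`. -/
lemma emb_step {α : Type} [DecidableEq α] (G : Finset (Finset ℕ)) (V E : Finset α) (m : ℝ)
    (Φ : Finset (α → ℕ)) (hE : ∀ A ∈ G, A.card = E.card)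
    (hΦ : ∀ φ ∈ Φ, Set.InjOn φ ↑V ∧ ∀ x, x ∉ V → φ x = 0)
    (hm : ∀ φ ∈ Φ, m ≤ ((G.filter fun A => (E ∩ V).image φ ⊆ A ∧
      Disjoint A (V.image φ \ (E ∩ V).image φ)).card : ℝ)) :
    ∃ Ψ : Finset (α → ℕ), (∀ ψ ∈ Ψ, Set.InjOn ψ ↑(E ∪ V) ∧ (∀ x, x ∉ E ∪ V → ψ x = 0) ∧
      E.image ψ ∈ G ∧ ∃ φ ∈ Φ, ∀ x ∈ V, ψ x = φ x) ∧ (Φ.card : ℝ) * m ≤ Ψ.card := by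
  set good : (α → ℕ) → Finset (Finset ℕ) := fun φ => G.filter fun A => (E ∩ V).image φ ⊆ A ∧
      Disjoint A (V.image φ \ (E ∩ V).image φ) with hgood
  have key : ∀ φ A, ∃ ψ : α → ℕ, φ ∈ Φ → A ∈ good φ → (∀ x ∈ V, ψ x = φ x) ∧
      (∀ x, x ∉ E ∪ V → ψ x = 0) ∧ Set.InjOn ψ ↑(E ∪ V) ∧ E.image ψ = A := by
    intro φ A
    by_cases h : φ ∈ Φ ∧ A ∈ good φ
    · obtain ⟨h1, h2⟩ := h
      rw [hgood, Finset.mem_filter] at h2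
      obtain ⟨ψ, hψ⟩ := extend_map φ V E A (hΦ φ h1).1 (hE A h2.1) h2.2.1 h2.2.2
      exact ⟨ψ, fun _ _ => hψ⟩
    · exact ⟨φ, fun h1 h2 => absurd ⟨h1, h2⟩ h⟩
  choose ext hext using key
  refine ⟨(Φ.sigma good).image fun p => ext p.1 p.2, ?_, ?_⟩
  · intro ψ hψ
    obtain ⟨⟨φ, A⟩, hp, rfl⟩ := Finset.mem_image.1 hψ
    rw [Finset.mem_sigma] at hp
    obtain ⟨h1, h2, h3, h4⟩ := hext φ A hp.1 hp.2
    refine ⟨h3, h2, ?_, φ, hp.1, h1⟩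
    have := hp.2
    rw [hgood, Finset.mem_filter] at this
    simp only
    rw [h4]; exact this.1
  · rw [Finset.card_image_of_injOn, Finset.card_sigma]
    · push_cast
      calc (Φ.card : ℝ) * m = ∑ φ ∈ Φ, m := by simp
        _ ≤ _ := Finset.sum_le_sum fun φ hφ => hm φ hφ
    · rintro ⟨φ, A⟩ hp ⟨φ', A'⟩ hp' heq
      rw [Finset.mem_coe, Finset.mem_sigma] at hp hp'
      obtain ⟨h1, h2, h3, h4⟩ := hext φ A hp.1 hp.2
      obtain ⟨h1', h2', h3', h4'⟩ := hext φ' A' hp'.1 hp'.2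
      simp only at heq
      have hA : A = A' := by rw [← h4, ← h4', heq]
      have hφ : φ = φ' := by
        funext x
        by_cases hx : x ∈ V
        · rw [← h1 x hx, ← h1' x hx, heq]
        · rw [(hΦ φ hp.1).2 x hx, (hΦ φ' hp'.1).2 x hx]
      subst hA; subst hφ; rfl

lemma emb_count {α : Type} [DecidableEq α] (G : Finset (Finset ℕ)) (k s : ℕ) (hk : 1 ≤ k)
    (x y : ℝ) (hx : 0 ≤ x) (hy : 0 ≤ y) (hGk : ∀ A ∈ G, A.card = k) (hne : G.Nonempty)
    (hG : ∀ D : Finset ℕ, (∃ A ∈ G, D ⊆ A) → D.card < k → ∀ W : Finset ℕ, Disjoint W D →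
      W.card ≤ s → x * y ^ (k - 1 - D.card) ≤
        ((G.filter fun A => D ⊆ A ∧ Disjoint A W).card : ℝ))
    (H : Finset (Finset α)) (hH : IsHypertree H) (hHk : ∀ E ∈ H, E.card = k)
    (hs : (vertexSet H).card ≤ s) :
    H.card ≤ (vertexSet H).card ∧ ∃ Φ : Finset (α → ℕ),
      (∀ φ ∈ Φ, Set.InjOn φ ↑(vertexSet H) ∧ (∀ v, v ∉ vertexSet H → φ v = 0) ∧
        ∀ E ∈ H, E.image φ ∈ G) ∧
      x ^ H.card * y ^ ((vertexSet H).card - H.card) ≤ Φ.card := by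
  induction hH with
  | single E =>
    have hv : vertexSet {E} = E := by simp [vertexSet]
    have hEk := hHk E (by simp)
    rw [hv] at hs ⊢
    refine ⟨by rw [Finset.card_singleton]; omega, ?_⟩
    obtain ⟨Ψ, h1, h2⟩ := emb_step G ∅ E (x * y ^ (k - 1)) {fun _ => 0}
      (fun A hA => by rw [hGk A hA, hEk]) (by simp) (by
        intro φ _
        have := hG ∅ (by obtain ⟨A, hA⟩ := hne; exact ⟨A, hA, by simp⟩) (by simp; omega) ∅
          (by simp) (by simp)
        simpa using this)
    refine ⟨Ψ, ?_, ?_⟩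
    · intro ψ hψ
      obtain ⟨a1, a2, a3, _⟩ := h1 ψ hψ
      simp only [Finset.union_empty] at a1 a2
      exact ⟨a1, a2, by simpa using a3⟩
    · simpa [hEk] using h2
  | @grow H E F hH hE hF hint ih =>
    have hHk' : ∀ E ∈ H, E.card = k := fun E' h => hHk E' (Finset.mem_insert_of_mem h)
    have hEk := hHk E (Finset.mem_insert_self _ _)
    have hFk := hHk' F hF
    rw [vertexSet_insert'] at hs ⊢
    set V := vertexSet H with hV
    obtain ⟨ihc, Φ, hΦ, hΦc⟩ := ih hHk' ((Finset.card_le_card Finset.subset_union_right).trans hs)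
    have hFV : F ⊆ V := subset_vertexSet' hF
    have hlt : (E ∩ V).card < k := by
      rw [hint]
      by_contra hcon
      have h1 : E ∩ F = E := Finset.eq_of_subset_of_card_le Finset.inter_subset_left (by omega)
      have h2 : E ∩ F = F := Finset.eq_of_subset_of_card_le Finset.inter_subset_right (by omega)
      exact hE (by rw [← h1, h2]; exact hF)
    have hcu : (E ∪ V).card + (E ∩ V).card = k + V.card := by
      rw [Finset.card_union_add_card_inter, hEk]
    have hci : (insert E H).card = H.card + 1 := Finset.card_insert_of_notMem hE
    rw [hci]
    refine ⟨by omega, ?_⟩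
    obtain ⟨Ψ, h1, h2⟩ := emb_step G V E (x * y ^ (k - 1 - (E ∩ V).card)) Φ
      (fun A hA => by rw [hGk A hA, hEk]) (fun φ hφ => ⟨(hΦ φ hφ).1, (hΦ φ hφ).2.1⟩) (by
        intro φ hφ
        have hc1 : ((E ∩ V).image φ).card = (E ∩ V).card :=
          Finset.card_image_of_injOn ((hΦ φ hφ).1.mono (by intro x hx; simp at hx; exact hx.2))
        have := hG ((E ∩ V).image φ) ⟨F.image φ, (hΦ φ hφ).2.2 F hF, by
            rw [hint]; exact Finset.image_subset_image Finset.inter_subset_right⟩ (by omega)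
          (V.image φ \ (E ∩ V).image φ) Finset.sdiff_disjoint
          ((Finset.card_le_card Finset.sdiff_subset).trans (Finset.card_image_le.trans
            ((Finset.card_le_card Finset.subset_union_right).trans hs)))
        rwa [hc1] at this)
    refine ⟨Ψ, ?_, ?_⟩
    · intro ψ hψ
      obtain ⟨a1, a2, a3, φ, hφ, a4⟩ := h1 ψ hψ
      refine ⟨a1, a2, ?_⟩
      intro E' hE'
      rcases Finset.mem_insert.1 hE' with rfl | hE'
      · exact a3
      · have : E'.image ψ = E'.image φ :=
          Finset.image_congr fun v hv => a4 v (subset_vertexSet' hE' hv)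
        rw [this]; exact (hΦ φ hφ).2.2 E' hE'
    · refine le_trans ?_ h2
      have e : (E ∪ V).card - (H.card + 1) = (V.card - H.card) + (k - 1 - (E ∩ V).card) := by
        omega
      rw [e, pow_add y, pow_succ x]
      calc x ^ H.card * x * (y ^ (V.card - H.card) * y ^ (k - 1 - (E ∩ V).card))
          = (x ^ H.card * y ^ (V.card - H.card)) * (x * y ^ (k - 1 - (E ∩ V).card)) := by ring
        _ ≤ _ := mul_le_mul_of_nonneg_right hΦc (by positivity)

/-- Every copy arises from at most `s ^ s` embeddings. -/
lemma copies_ge {α : Type} [DecidableEq α] (H : Finset (Finset α)) (F : Finset (Finset ℕ))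
    (Φ : Finset (α → ℕ))
    (hΦ : ∀ φ ∈ Φ, Set.InjOn φ ↑(vertexSet H) ∧ (∀ v, v ∉ vertexSet H → φ v = 0) ∧
        ∀ E ∈ H, E.image φ ∈ F) :
    Φ.card ≤ (vertexSet H).card ^ (vertexSet H).card * (copies H F).card := by
  refine Finset.card_le_mul_card_image_of_maps_to
    (f := fun φ => H.image fun E => E.image φ) ?_ _ ?_
  · intro φ hφ
    obtain ⟨h1, h2, h3⟩ := hΦ φ hφ
    rw [copies, Finset.mem_filter, Finset.mem_powerset]
    refine ⟨?_, φ, h1, rfl⟩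
    intro K hK
    obtain ⟨E, hE, rfl⟩ := Finset.mem_image.1 hK
    exact h3 E hE
  · intro K hK
    rw [copies, Finset.mem_filter] at hK
    obtain ⟨-, φ₀, hi, rfl⟩ := hK
    set V := vertexSet H with hV
    set U := V.image φ₀ with hU
    have hUc : U.card ≤ V.card := Finset.card_image_le
    have hmem : ∀ φ ∈ Φ.filter (fun φ => (H.image fun E => E.image φ) =
        H.image fun E => E.image φ₀), ∀ v ∈ V, φ v ∈ U := by
      intro φ hφ v hv
      rw [Finset.mem_filter] at hφ
      obtain ⟨E, hE, hvE⟩ : ∃ E ∈ H, v ∈ E := by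
        simpa [hV, vertexSet, Finset.mem_sup] using hv
      have : E.image φ ∈ H.image fun E => E.image φ₀ := by
        rw [← hφ.2]; exact Finset.mem_image_of_mem _ hE
      obtain ⟨E', hE', he⟩ := Finset.mem_image.1 this
      have h2 : φ v ∈ E'.image φ₀ := by rw [he]; exact Finset.mem_image_of_mem _ hvE
      exact Finset.image_subset_image (subset_vertexSet' hE') h2
    calc _ ≤ (V.pi fun _ => U).card := by
          refine Finset.card_le_card_of_injOn (fun φ v _ => φ v) ?_ ?_
          · intro φ hφ
            rw [Finset.mem_coe, Finset.mem_pi]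
            intro v hv
            exact hmem φ hφ v hv
          · intro φ hφ φ' hφ' heq
            rw [Finset.mem_coe, Finset.mem_filter] at hφ hφ'
            funext v
            by_cases hv : v ∈ V
            · exact congrFun (congrFun heq v) hv
            · rw [(hΦ φ hφ.1).2.1 v hv, (hΦ φ' hφ'.1).2.1 v hv]
      _ = U.card ^ V.card := by simp [Finset.card_pi]
      _ ≤ _ := Nat.pow_le_pow_left hUc _

/-- Cleaning: a nonempty subfamily in which every positive degree is large. -/
lemma clean (k n : ℕ) (hk : 1 ≤ k) (F : Finset (Finset ℕ)) (hF : IsKGraphOn k n F)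
    (hne : 0 < F.card) (hkn : k ≤ n) :
    ∃ G ⊆ F, G.Nonempty ∧ ∀ D : Finset ℕ, (∃ A ∈ G, D ⊆ A) → D.card < k →
      (F.card : ℝ) / (2 * k * (n.choose D.card : ℝ)) ≤ ((G.filter fun A => D ⊆ A).card : ℝ) := by
  set w : ℕ → ℝ := fun i => (F.card : ℝ) / (2 * k * (n.choose i : ℝ)) with hw
  have hw0 : ∀ i, 0 ≤ w i := fun i => by rw [hw]; positivity
  set P : Finset (Finset ℕ) := (vtx n).powerset.filter fun D => D.card < k with hP
  set sh : Finset (Finset ℕ) → Finset (Finset ℕ) := fun G =>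
    P.filter fun D => ∃ A ∈ G, D ⊆ A with hsh
  obtain ⟨G, hG, hmax⟩ := Finset.exists_max_image F.powerset
    (fun G => (G.card : ℝ) - ∑ D ∈ sh G, w D.card) ⟨F, by simp⟩
  rw [Finset.mem_powerset] at hG
  have hPsum : ∑ D ∈ P, w D.card = F.card / 2 := by
    have hdec : P = (Finset.range k).biUnion fun i => (vtx n).powersetCard i := by
      ext D
      simp only [hP, Finset.mem_filter, Finset.mem_powerset, Finset.mem_biUnion, Finset.mem_range,
        Finset.mem_powersetCard]
      constructor
      · rintro ⟨h1, h2⟩; exact ⟨_, h2, h1, rfl⟩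
      · rintro ⟨i, h1, h2, h3⟩; exact ⟨h2, by omega⟩
    rw [hdec, Finset.sum_biUnion]
    · have : ∀ i ∈ Finset.range k, ∑ D ∈ (vtx n).powersetCard i, w D.card
          = (F.card : ℝ) / (2 * k) := by
        intro i hi
        rw [Finset.mem_range] at hi
        rw [Finset.sum_congr rfl (g := fun _ => w i)
          (fun D hD => by rw [(Finset.mem_powersetCard.1 hD).2])]
        have hc : (0 : ℝ) < n.choose i := by exact_mod_cast Nat.choose_pos (by omega)
        have hk' : (0 : ℝ) < k := by exact_mod_cast hk
        simp only [Finset.sum_const, Finset.card_powersetCard, vtx, Nat.card_Icc,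
          Nat.add_sub_cancel, nsmul_eq_mul, hw]
        field_simp
      rw [Finset.sum_congr rfl this]
      have hk' : (0 : ℝ) < k := by exact_mod_cast hk
      simp only [Finset.sum_const, Finset.card_range, nsmul_eq_mul]
      field_simp
    · intro i _ j _ hij
      exact Finset.pairwise_disjoint_powersetCard (vtx n) hij
  have hF0 : (0 : ℝ) < F.card := by exact_mod_cast hne
  refine ⟨G, hG, ?_, ?_⟩
  · have h1 := hmax F (by simp)
    have h2 : ∑ D ∈ sh F, w D.card ≤ ∑ D ∈ P, w D.card :=
      Finset.sum_le_sum_of_subset_of_nonneg (Finset.filter_subset _ _) fun _ _ _ => hw0 _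
    have h3 : 0 ≤ ∑ D ∈ sh G, w D.card := Finset.sum_nonneg fun _ _ => hw0 _
    have : (0 : ℝ) < G.card := by linarith
    exact Finset.card_pos.1 (by exact_mod_cast this)
  · intro D hD hDk
    by_contra hcon
    push Not at hcon
    have h1 := hmax (G.filter fun A => ¬ D ⊆ A)
      (Finset.mem_powerset.2 ((Finset.filter_subset _ _).trans hG))
    have h2 : ((G.filter fun A => D ⊆ A).card : ℝ) + ((G.filter fun A => ¬ D ⊆ A).card : ℝ)
        = G.card := by
      exact_mod_cast Finset.card_filter_add_card_filter_not (s := G) (fun A => D ⊆ A)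
    have hDsh : D ∈ sh G := by
      rw [hsh, Finset.mem_filter, hP, Finset.mem_filter, Finset.mem_powerset]
      refine ⟨⟨?_, hDk⟩, hD⟩
      obtain ⟨A, hA, hDA⟩ := hD
      exact hDA.trans (hF A (hG hA)).1
    have hsub : sh (G.filter fun A => ¬ D ⊆ A) ⊆ (sh G).erase D := by
      intro D' hD'
      rw [hsh, Finset.mem_filter] at hD'
      obtain ⟨hp, A, hA, hDA⟩ := hD'
      rw [Finset.mem_filter] at hA
      rw [Finset.mem_erase]
      refine ⟨fun he => hA.2 (he ▸ hDA), ?_⟩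
      rw [hsh, Finset.mem_filter]
      exact ⟨hp, A, hA.1, hDA⟩
    have h3 : ∑ D ∈ sh (G.filter fun A => ¬ D ⊆ A), w D.card ≤
        ∑ D ∈ (sh G).erase D, w D.card :=
      Finset.sum_le_sum_of_subset_of_nonneg hsub fun _ _ _ => hw0 _
    have h4 := Finset.add_sum_erase (sh G) (fun D => w D.card) hDsh
    have h5 : ((G.filter fun A => D ⊆ A).card : ℝ) < w D.card := hcon
    linarith

/-- Upper bound for degrees of sets one element larger than `D`. -/
lemma deg_upper (k n : ℕ) (G : Finset (Finset ℕ)) (hG : IsKGraphOn k n G) (D : Finset ℕ)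
    (hD : D ⊆ vtx n) (v : ℕ) (hv : v ∉ D) :
    (G.filter fun A => D ⊆ A ∧ v ∈ A).card ≤ (n - D.card).choose (k - 1 - D.card) := by
  have hc : (vtx n \ D).card = n - D.card := by
    rw [Finset.card_sdiff_of_subset hD]; simp [vtx]
  rw [← hc, ← Finset.card_powersetCard]
  refine Finset.card_le_card_of_injOn (fun A => A \ insert v D) ?_ ?_
  · intro A hA
    rw [Finset.mem_coe, Finset.mem_filter] at hA
    rw [Finset.mem_coe, Finset.mem_powersetCard]
    have hsub : insert v D ⊆ A := Finset.insert_subset hA.2.2 hA.2.1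
    refine ⟨Finset.sdiff_subset_sdiff (hG A hA.1).1 (Finset.subset_insert _ _), ?_⟩
    rw [Finset.card_sdiff_of_subset hsub, (hG A hA.1).2, Finset.card_insert_of_notMem hv]
    omega
  · intro A hA B hB he
    rw [Finset.mem_coe, Finset.mem_filter] at hA hB
    have hsA : insert v D ⊆ A := Finset.insert_subset hA.2.2 hA.2.1
    have hsB : insert v D ⊆ B := Finset.insert_subset hB.2.2 hB.2.1
    simp only at he
    rw [← Finset.sdiff_union_of_subset hsA, he, Finset.sdiff_union_of_subset hsB]

lemma choose_lower (k n i : ℕ) (hn : 2 * k ≤ n) (hi : i < k) :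
    (n : ℝ) ^ (k - 1 - i) / (2 ^ k * k.factorial) ≤ ((n - i).choose (k - 1 - i) : ℝ) := by
  set r := k - 1 - i with hr
  have h1 := Nat.pow_le_choose (α := ℝ) r (n - i)
  refine le_trans ?_ h1
  have h2 : (n : ℝ) / 2 ≤ ((n - i + 1 - r : ℕ) : ℝ) := by
    have : n ≤ 2 * (n - i + 1 - r) := by omega
    have : (n : ℝ) ≤ 2 * ((n - i + 1 - r : ℕ) : ℝ) := by exact_mod_cast this
    linarith
  have h3 : ((r.factorial : ℕ) : ℝ) ≤ k.factorial := by
    exact_mod_cast Nat.factorial_le (by omega)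
  have h4 : (2 : ℝ) ^ r ≤ 2 ^ k := pow_le_pow_right₀ (by norm_num) (by omega)
  have h5 : (0 : ℝ) < r.factorial := by exact_mod_cast Nat.factorial_pos r
  calc (n : ℝ) ^ r / (2 ^ k * k.factorial) ≤ (n : ℝ) ^ r / (2 ^ r * r.factorial) := by gcongr
    _ = ((n : ℝ) / 2) ^ r / r.factorial := by rw [div_pow, div_div]
    _ ≤ _ := by gcongr

lemma w_lower (k n i : ℕ) (a : ℝ) (hn : 2 * k ≤ n) (hi : i < k) (ha0 : 0 ≤ a) :
    a * ((n - i).choose (k - 1 - i) : ℝ) / (2 * k.factorial) ≤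
      a * (n.choose (k - 1) : ℝ) / (2 * k * (n.choose i : ℝ)) := by
  have h1 : n.choose (k - 1) * (k - 1).choose i = n.choose i * (n - i).choose (k - 1 - i) :=
    Nat.choose_mul (by omega)
  have h1' : (n.choose (k - 1) : ℝ) * ((k - 1).choose i : ℝ)
      = n.choose i * ((n - i).choose (k - 1 - i) : ℝ) := by exact_mod_cast h1
  have h2 : k * (k - 1).choose i ≤ k.factorial := by
    have := Nat.choose_mul_factorial_mul_factorial (show i ≤ k - 1 by omega)
    have hp : 0 < i.factorial * (k - 1 - i).factorial :=
      Nat.mul_pos (Nat.factorial_pos _) (Nat.factorial_pos _)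
    rw [← Nat.mul_factorial_pred (show k ≠ 0 by omega)]
    refine Nat.mul_le_mul_left _ ?_
    rw [← this, mul_assoc]
    exact Nat.le_mul_of_pos_right _ hp
  have h2' : (k : ℝ) * ((k - 1).choose i : ℝ) ≤ k.factorial := by exact_mod_cast h2
  have hc : (0 : ℝ) < n.choose i := by exact_mod_cast Nat.choose_pos (by omega)
  have hk' : (0 : ℝ) < k := by exact_mod_cast (by omega : 0 < k)
  have hf : (0 : ℝ) < k.factorial := by exact_mod_cast Nat.factorial_pos k
  rw [div_le_div_iff₀ (by positivity) (by positivity)]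
  have h3 : (0 : ℝ) ≤ n.choose (k - 1) := by positivity
  calc a * ((n - i).choose (k - 1 - i) : ℝ) * (2 * k * (n.choose i : ℝ))
      = 2 * a * k * (n.choose i * ((n - i).choose (k - 1 - i) : ℝ)) := by ring
    _ = 2 * a * (n.choose (k - 1) : ℝ) * (k * ((k - 1).choose i : ℝ)) := by rw [← h1']; ring
    _ ≤ 2 * a * (n.choose (k - 1) : ℝ) * k.factorial := by gcongr
    _ = _ := by ring

/-- a `k`-graph with `a·C(n,k−1)` edges, `a ≥ 8s·k!`, contains at least
`η·a^t·n^{s−t}` copies of any `k`-tree with `s` vertices and `t` edges. -/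
theorem stmt_10 {α : Type} [DecidableEq α] (k s t : ℕ) (hk : 2 ≤ k) (hs : 2 ≤ s) (ht : 1 ≤ t)
    (H : Finset (Finset α)) (hH : IsKTree k H)
    (hvs : (vertexSet H).card = s) (hte : H.card = t) :
    ∃ η : ℝ, 0 < η ∧ ∃ n₀ : ℕ, ∀ n ≥ n₀, ∀ F : Finset (Finset ℕ), ∀ a : ℝ,
      IsKGraphOn k n F → (F.card : ℝ) = a * (n.choose (k - 1) : ℝ) →
      ((8 * s * Nat.factorial k : ℕ) : ℝ) ≤ a →
      η * a ^ t * (n : ℝ) ^ (s - t) ≤ ((copies H F).card : ℝ) := by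
  set c : ℝ := 1 / (4 * k.factorial * (2 ^ k * k.factorial)) with hc
  have hf : (0 : ℝ) < k.factorial := by exact_mod_cast Nat.factorial_pos k
  have hc0 : 0 < c := by rw [hc]; positivity
  have hs0 : (0 : ℝ) < s := by exact_mod_cast (by omega : 0 < s)
  refine ⟨c ^ t / (s : ℝ) ^ s, by positivity, 2 * k, ?_⟩
  intro n hn F a hF hFa ha
  push_cast at ha
  have ha0 : 0 < a := lt_of_lt_of_le (by positivity) ha
  have hFpos : 0 < F.card := by
    have : (0 : ℝ) < n.choose (k - 1) := by exact_mod_cast Nat.choose_pos (by omega)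
    have : (0 : ℝ) < F.card := by rw [hFa]; positivity
    exact_mod_cast this
  obtain ⟨G, hGF, hGne, hGdeg⟩ := clean k n (by omega) F hF hFpos (by omega)
  have hGk : IsKGraphOn k n G := fun A hA => hF A (hGF hA)
  obtain ⟨-, Φ, hΦ, hΦc⟩ := emb_count G k s (by omega) (c * a) n (by positivity) (by positivity)
    (fun A hA => (hGk A hA).2) hGne (by
      intro D hD hDk W hWD hWs
      have hDn : D ⊆ vtx n := by
        obtain ⟨A, hA, hDA⟩ := hD
        exact hDA.trans (hGk A hA).1
      set i := D.card with hi
      set u : ℝ := ((n - i).choose (k - 1 - i) : ℝ) with hu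
      have hu0 : 0 ≤ u := by positivity
      have h1 := hGdeg D hD hDk
      rw [hFa] at h1
      have h2 := (w_lower k n i a hn hDk ha0.le).trans h1
      have h3 := choose_lower k n i hn hDk
      have h4 : (G.filter fun A => D ⊆ A) ⊆ (G.filter fun A => D ⊆ A ∧ Disjoint A W) ∪
          W.biUnion fun v => G.filter fun A => D ⊆ A ∧ v ∈ A := by
        intro A hA
        rw [Finset.mem_filter] at hA
        rw [Finset.mem_union]
        by_cases hd : Disjoint A W
        · left; rw [Finset.mem_filter]; exact ⟨hA.1, hA.2, hd⟩
        · right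
          obtain ⟨v, hvA, hvW⟩ := Finset.not_disjoint_iff.1 hd
          rw [Finset.mem_biUnion]
          exact ⟨v, hvW, by rw [Finset.mem_filter]; exact ⟨hA.1, hA.2, hvA⟩⟩
      have h5 : (W.biUnion fun v => G.filter fun A => D ⊆ A ∧ v ∈ A).card ≤
          s * (n - i).choose (k - 1 - i) := by
        refine (Finset.card_biUnion_le_card_mul _ _ _ fun v hv =>
          deg_upper k n G hGk D hDn v (Finset.disjoint_left.1 hWD hv)).trans ?_
        exact Nat.mul_le_mul_right _ hWs
      have h6 := (Finset.card_le_card h4).trans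
        ((Finset.card_union_le _ _).trans (Nat.add_le_add_left h5 _))
      have h7 : ((G.filter fun A => D ⊆ A).card : ℝ) ≤
          ((G.filter fun A => D ⊆ A ∧ Disjoint A W).card : ℝ) + s * u := by
        rw [hu]; exact_mod_cast h6
      have h8 : s * u ≤ a * u / (4 * k.factorial) := by
        rw [le_div_iff₀ (by positivity)]
        have : 8 * s * k.factorial * u ≤ a * u := mul_le_mul_of_nonneg_right ha hu0
        have h0 : 0 ≤ (s : ℝ) * k.factorial * u := by positivity
        linarith
      have h9 : a * u / (2 * k.factorial) = a * u / (4 * k.factorial) +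
          a * u / (4 * k.factorial) := by field_simp; ring
      have h10 : c * a * (n : ℝ) ^ (k - 1 - i) ≤ a * u / (4 * k.factorial) := by
        calc c * a * (n : ℝ) ^ (k - 1 - i)
            = a * ((n : ℝ) ^ (k - 1 - i) / (2 ^ k * k.factorial)) / (4 * k.factorial) := by
              rw [hc]; field_simp
          _ ≤ _ := by gcongr
      linarith) H hH.1 hH.2 hvs.le
  have hcop := copies_ge H F Φ fun φ hφ =>
    ⟨(hΦ φ hφ).1, (hΦ φ hφ).2.1, fun E hE => hGF ((hΦ φ hφ).2.2 E hE)⟩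
  rw [hvs] at hcop hΦc
  rw [hte] at hΦc
  have hcop' : (Φ.card : ℝ) ≤ (s : ℝ) ^ s * ((copies H F).card : ℝ) := by exact_mod_cast hcop
  have hfin := hΦc.trans hcop'
  have hss : (0 : ℝ) < (s : ℝ) ^ s := by positivity
  calc c ^ t / (s : ℝ) ^ s * a ^ t * (n : ℝ) ^ (s - t)
      = ((c * a) ^ t * (n : ℝ) ^ (s - t)) / (s : ℝ) ^ s := by rw [mul_pow]; ring
    _ ≤ _ := by rw [div_le_iff₀ hss]; linarith
end
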